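/- arXiv:2006.03754 — 4 statements merged into one kernel-verified Lean document; each statement's English description precedes it below -/
import Mathlib

section
/- There exists a finite constant C > 0 such that ‖T(f₁,f₂)‖_{5/2} ≤ C ‖f₁‖_{5/3} ‖f₂‖_{5/3} for all nonnegative measurable functions f₁, f₂ on ℝ; that is, in dimension n = 2 the bilinear spherical average T is of strong type at the point M = (3/5, 3/5; 2/5). -/
open MeasureTheory ENNReal

/-- The `L^p` "norm" (with respect to Lebesgue measure on `ℝ`) of an
`ℝ≥0∞`-valued function, with the convention for `p = ∞`. -/
noncomputable def lpNorm (p : ℝ≥0∞) (g : ℝ → ℝ≥0∞) : ℝ≥0∞ :=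
  if p = ∞ then essSup g (volume : Measure ℝ)
  else (∫⁻ x, g x ^ p.toReal) ^ (1 / p.toReal)

/-- The bilinear spherical average in dimension `n = 2`:
`T(f₁,f₂)(x) = (1/(2π)) ∫₀^{2π} f₁(x − cos t) f₂(x − sin t) dt`. -/
noncomputable def T2 (f₁ f₂ : ℝ → ℝ) (x : ℝ) : ℝ≥0∞ :=
  (ENNReal.ofReal (2 * Real.pi))⁻¹ *
    ∫⁻ t in Set.Ioc 0 (2 * Real.pi),
      ENNReal.ofReal (f₁ (x - Real.cos t)) * ENNReal.ofReal (f₂ (x - Real.sin t))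

/-!
By duality it suffices to bound the trilinear form
`∫∫ f₁(x - cos t) f₂(x - sin t) h(x) dt dx` by the product of the three `L^{5/3}` norms. For
`c : ℂ` the translates `x - Re(conj c * exp(it))` with `c = 1`, `c = i` and `c = 0` treat the three
functions symmetrically.

For two of the points, `c` and `d`, the map from `(x, t)` to the two translates has Jacobian `J_cd`
depending only on `t`, so the bilinear form weighted by `|J_cd|` is bounded on `L¹ × L¹`. Without
the weight, `t ↦ Re(conj (c - d) * exp(it))` has only nondegenerate critical points, so the preimage
of a set `B` has measure `O(|B|^{1/2})`; interpolating the two resulting restricted estimates gives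
the bound on `L^{4/3} × L^{4/3}`. Hölder's inequality with exponents `3/10`, `3/10`, `2/5` combines
two weighted bounds with one unweighted bound into an `L^{5/3}` bound for the trilinear form with
weight `|J_cd J_de|^{3/10}`. Up to sign the three Jacobians are `sin t`, `cos t`, `sin t + cos t`;
no two of them vanish simultaneously, so the three weights add up to at least a positive constant.
-/

/-! ### Bilinear estimates from restricted estimates -/

theorem volume_Ioi_inter_setOf_ofReal_lt (a : ℝ≥0∞) :
    volume (Set.Ioi (0 : ℝ) ∩ {s | ENNReal.ofReal s < a}) = a := by
  induction a with
  | top => simp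
  | coe a =>
    have : Set.Ioi (0 : ℝ) ∩ {s | ENNReal.ofReal s < a} = Set.Ioo 0 (a : ℝ) := by
      ext s
      simp only [Set.mem_inter_iff, Set.mem_Ioi, Set.mem_ofPred_eq, Set.mem_Ioo]
      refine and_congr_right fun hs => ?_
      rw [← ENNReal.ofReal_coe_nnreal, ENNReal.ofReal_lt_ofReal_iff_of_nonneg hs.le]
    rw [this]
    simp

theorem setLIntegral_Ioi_inter_rpow_sub_one_le {r : ℝ} (hr : 0 < r) (a : ℝ≥0∞) :
    ∫⁻ s in Set.Ioi 0 ∩ {s | ENNReal.ofReal s < a}, ENNReal.ofReal s ^ (r - 1) ≤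
      ENNReal.ofReal r⁻¹ * a ^ r := by
  have hr1 : -1 < r - 1 := by linarith
  induction a with
  | top => simp [ENNReal.top_rpow_of_pos hr, ENNReal.mul_top, hr]
  | coe a =>
    have hsub : Set.Ioi (0 : ℝ) ∩ {s | ENNReal.ofReal s < a} ⊆ Set.Ioc 0 (a : ℝ) := by
      rintro s ⟨hs, hsa⟩
      rw [Set.mem_ofPred_eq, ← ENNReal.ofReal_coe_nnreal] at hsa
      exact ⟨hs, (ENNReal.ofReal_lt_ofReal_iff_of_nonneg (le_of_lt hs)).1 hsa |>.le⟩
    have h_int : IntegrableOn (fun s : ℝ => s ^ (r - 1)) (Set.Ioc 0 (a : ℝ)) :=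
      (intervalIntegral.intervalIntegrable_rpow' hr1).1
    calc
      _ ≤ ∫⁻ s in Set.Ioc 0 (a : ℝ), ENNReal.ofReal s ^ (r - 1) := lintegral_mono_set hsub
      _ = ∫⁻ s in Set.Ioc 0 (a : ℝ), ENNReal.ofReal (s ^ (r - 1)) :=
        setLIntegral_congr_fun measurableSet_Ioc fun s hs => ENNReal.ofReal_rpow_of_pos hs.1
      _ = ENNReal.ofReal (∫ s in (0 : ℝ)..a, s ^ (r - 1)) := by
        rw [intervalIntegral.integral_of_le a.coe_nonneg, ofReal_integral_eq_lintegral_ofReal h_int]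
        filter_upwards [ae_restrict_mem measurableSet_Ioc] with s hs
        exact Real.rpow_nonneg hs.1.le _
      _ = _ := by
        rw [integral_rpow (Or.inl hr1), sub_add_cancel, Real.zero_rpow hr.ne', sub_zero,
          div_eq_inv_mul, ENNReal.ofReal_mul (inv_nonneg.2 hr.le),
          ← ENNReal.ofReal_rpow_of_nonneg a.coe_nonneg hr.le, ENNReal.ofReal_coe_nnreal]

theorem setLIntegral_Ioi_indicator_mul_rpow_le {r : ℝ} (hr : 0 < r) (a : ℝ≥0∞) :
    ∫⁻ s in Set.Ioi (0 : ℝ),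
        {s | ENNReal.ofReal s < a}.indicator (fun _ => a) s * ENNReal.ofReal s ^ (r - 1) ≤
      ENNReal.ofReal r⁻¹ * a ^ (1 + r) := by
  have hS : MeasurableSet {s : ℝ | ENNReal.ofReal s < a} :=
    measurableSet_lt (by fun_prop) measurable_const
  calc
    _ = ∫⁻ s in Set.Ioi (0 : ℝ), {s | ENNReal.ofReal s < a}.indicator
          (fun s => a * ENNReal.ofReal s ^ (r - 1)) s := by
      simp only [Set.indicator_mul_left]
    _ = a * ∫⁻ s in Set.Ioi 0 ∩ {s | ENNReal.ofReal s < a}, ENNReal.ofReal s ^ (r - 1) := by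
      rw [lintegral_indicator hS, Measure.restrict_restrict hS, Set.inter_comm,
        lintegral_const_mul _ (by fun_prop)]
    _ ≤ a * (ENNReal.ofReal r⁻¹ * a ^ r) := by
      gcongr
      exact setLIntegral_Ioi_inter_rpow_sub_one_le hr a
    _ = _ := by rw [mul_left_comm, ENNReal.rpow_add_of_nonneg _ _ zero_le_one hr.le, rpow_one]

section RestrictedType

variable {Ω X Y : Type*} [MeasurableSpace Ω] [MeasurableSpace X] [MeasurableSpace Y]
  {m : Measure Ω} {μ : Measure X} {ν : Measure Y} {u : Ω → X} {v : Ω → Y} {C : ℝ≥0∞} {p : ℝ}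
  {F : X → ℝ≥0∞} {G : Y → ℝ≥0∞}

theorem setLIntegral_comp_le_of_measure_preimage_inter_le (hu : Measurable u) {S : Set Ω}
    (h : ∀ A, MeasurableSet A → m (u ⁻¹' A ∩ S) ≤ C * μ A) (hF : Measurable F) :
    ∫⁻ ω in S, F (u ω) ∂m ≤ C * ∫⁻ x, F x ∂μ := by
  have hle : (m.restrict S).map u ≤ C • μ := Measure.le_iff.2 fun A hA => by
    rw [Measure.map_apply hu hA, Measure.restrict_apply (hu hA)]
    exact h A hA
  calc
    _ = ∫⁻ x, F x ∂(m.restrict S).map u := (lintegral_map hF hu).symm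
    _ ≤ ∫⁻ x, F x ∂(C • μ) := lintegral_mono' hle le_rfl
    _ = _ := lintegral_smul_measure _ _

theorem lintegral_mul_min_eq [SFinite m] (hu : Measurable u) (hv : Measurable v)
    (hF : Measurable F) (hG : Measurable G) :
    ∫⁻ ω, F (u ω) * min (F (u ω)) (G (v ω)) ∂m =
      ∫⁻ s in Set.Ioi (0 : ℝ), ∫⁻ ω in v ⁻¹' {y | ENNReal.ofReal s < G y},
        {x | ENNReal.ofReal s < F x}.indicator F (u ω) ∂m := by
  set S : ℝ → Set Ω := fun s => {ω | ENNReal.ofReal s < G (v ω)} ∩ {ω | ENNReal.ofReal s < F (u ω)}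
    with hS
  have hmeas : Measurable (Function.uncurry fun ω s => (S s).indicator (fun ω => F (u ω)) ω) := by
    have hSm : MeasurableSet ({q : Ω × ℝ | ENNReal.ofReal q.2 < G (v q.1)} ∩
        {q | ENNReal.ofReal q.2 < F (u q.1)}) :=
      (measurableSet_lt (by fun_prop) (by fun_prop)).inter
        (measurableSet_lt (by fun_prop) (by fun_prop))
    exact (hF.comp (hu.comp measurable_fst)).indicator hSm
  calc
    _ = ∫⁻ ω, (∫⁻ s in Set.Ioi (0 : ℝ), (S s).indicator (fun ω => F (u ω)) ω) ∂m := by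
      refine lintegral_congr fun ω => ?_
      have hslice : ∀ s, (S s).indicator (fun ω => F (u ω)) ω =
          {s | ENNReal.ofReal s < min (F (u ω)) (G (v ω))}.indicator (fun _ => F (u ω)) s :=
        fun s => by
          simp only [S, Set.indicator_apply, Set.mem_inter_iff, Set.mem_ofPred_eq, lt_min_iff,
            and_comm]
      simp only [hslice]
      rw [lintegral_indicator_const (measurableSet_lt (by fun_prop) (by fun_prop)),
        Measure.restrict_apply' measurableSet_Ioi, Set.inter_comm,
        volume_Ioi_inter_setOf_ofReal_lt]
    _ = ∫⁻ s in Set.Ioi (0 : ℝ), ∫⁻ ω, (S s).indicator (fun ω => F (u ω)) ω ∂m :=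
      lintegral_lintegral_swap hmeas.aemeasurable
    _ = _ := lintegral_congr fun s => by
      rw [← lintegral_indicator (hv (measurableSet_lt measurable_const hG))]
      simp only [hS, ← Set.indicator_indicator]
      rfl

theorem measure_setOf_lt_rpow_le (s : ℝ) (hp : 0 ≤ p) (hG : Measurable G)
    (hG1 : ∫⁻ y, G y ^ p ∂ν ≤ 1) {r : ℝ} (hr : 0 ≤ r) :
    ν {y | ENNReal.ofReal s < G y} ^ r ≤ ENNReal.ofReal s ^ (-(p * r)) := by
  calc
    _ ≤ (ENNReal.ofReal s ^ (-p)) ^ r := by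
      gcongr
      rw [ENNReal.rpow_neg, ENNReal.le_inv_iff_mul_le, mul_comm]
      calc
        _ ≤ ENNReal.ofReal s ^ p * ν {y | ENNReal.ofReal s ^ p ≤ G y ^ p} := by
          gcongr with y
          exact fun h => ENNReal.rpow_le_rpow h.le hp
        _ ≤ _ := (mul_meas_ge_le_lintegral (hG.pow_const p) _).trans hG1
    _ = _ := by rw [← ENNReal.rpow_mul, neg_mul]

-- At the level `s` of `min F G` the hypothesis is applied with `B = {G > s}`, which by Markov's
-- inequality has measure at most `s ^ (-p)`.
theorem lintegral_mul_min_le [SFinite m] [SFinite μ] (hu : Measurable u) (hv : Measurable v)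
    (hp1 : 1 < p) (hp2 : p ≤ 2)
    (h : ∀ A B, MeasurableSet A → MeasurableSet B →
      m (u ⁻¹' A ∩ v ⁻¹' B) ≤ C * μ A * ν B ^ (2 / p - 1))
    (hF : Measurable F) (hG : Measurable G) (hG1 : ∫⁻ y, G y ^ p ∂ν ≤ 1) :
    ∫⁻ ω, F (u ω) * min (F (u ω)) (G (v ω)) ∂m ≤
      C * ENNReal.ofReal (p - 1)⁻¹ * ∫⁻ x, F x ^ p ∂μ := by
  have hp0 : 0 < p := by linarith
  have hmarkov (s : ℝ) : ν {y | ENNReal.ofReal s < G y} ^ (2 / p - 1) ≤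
      ENNReal.ofReal s ^ (p - 1 - 1) := by
    refine (measure_setOf_lt_rpow_le s hp0.le hG hG1 ?_).trans_eq ?_
    · rw [sub_nonneg, one_le_div hp0]; exact hp2
    · congr 1; field_simp; ring
  have hmeas : Measurable (Function.uncurry fun (s : ℝ) x =>
      {x | ENNReal.ofReal s < F x}.indicator F x * ENNReal.ofReal s ^ (p - 1 - 1)) := by
    have hS : MeasurableSet {q : ℝ × X | ENNReal.ofReal q.1 < F q.2} :=
      measurableSet_lt (by fun_prop) (by fun_prop)
    exact ((hF.comp measurable_snd).indicator hS).mul (by fun_prop)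
  calc
    _ = ∫⁻ s in Set.Ioi (0 : ℝ), ∫⁻ ω in v ⁻¹' {y | ENNReal.ofReal s < G y},
          {x | ENNReal.ofReal s < F x}.indicator F (u ω) ∂m := lintegral_mul_min_eq hu hv hF hG
    _ ≤ ∫⁻ s in Set.Ioi (0 : ℝ), C *
          ∫⁻ x, {x | ENNReal.ofReal s < F x}.indicator F x * ENNReal.ofReal s ^ (p - 1 - 1) ∂μ := by
      refine lintegral_mono fun s => ?_
      have hFs : MeasurableSet {x | ENNReal.ofReal s < F x} := measurableSet_lt (by fun_prop) hF
      have hGs : MeasurableSet {y | ENNReal.ofReal s < G y} := measurableSet_lt (by fun_prop) hG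
      refine (setLIntegral_comp_le_of_measure_preimage_inter_le hu (μ := μ)
        (C := C * ENNReal.ofReal s ^ (p - 1 - 1)) (fun A hA => ?_) (hF.indicator hFs)).trans_eq ?_
      · refine (h A _ hA hGs).trans ?_
        rw [mul_right_comm]
        gcongr
        exact hmarkov s
      · rw [lintegral_mul_const _ (hF.indicator hFs)]
        ring
    _ = C * ∫⁻ x, (∫⁻ s in Set.Ioi (0 : ℝ),
          {x | ENNReal.ofReal s < F x}.indicator F x * ENNReal.ofReal s ^ (p - 1 - 1)) ∂μ := by
      rw [← lintegral_lintegral_swap hmeas.aemeasurable]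
      exact lintegral_const_mul _ hmeas.lintegral_prod_right'
    _ ≤ C * ∫⁻ x, ENNReal.ofReal (p - 1)⁻¹ * F x ^ p ∂μ := by
      gcongr with x
      simpa only [add_sub_cancel, Set.indicator_apply, Set.mem_ofPred_eq] using
        setLIntegral_Ioi_indicator_mul_rpow_le (sub_pos.2 hp1) (F x)
    _ = _ := by rw [lintegral_const_mul _ (by fun_prop), mul_assoc]

theorem lintegral_mul_le_of_lintegral_rpow_le_one [SFinite m] [SFinite μ] [SFinite ν]
    (hu : Measurable u) (hv : Measurable v) (hp1 : 1 < p) (hp2 : p ≤ 2)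
    (h₁ : ∀ A B, MeasurableSet A → MeasurableSet B →
      m (u ⁻¹' A ∩ v ⁻¹' B) ≤ C * μ A * ν B ^ (2 / p - 1))
    (h₂ : ∀ A B, MeasurableSet A → MeasurableSet B →
      m (u ⁻¹' A ∩ v ⁻¹' B) ≤ C * μ A ^ (2 / p - 1) * ν B)
    (hF : Measurable F) (hG : Measurable G)
    (hF1 : ∫⁻ x, F x ^ p ∂μ ≤ 1) (hG1 : ∫⁻ y, G y ^ p ∂ν ≤ 1) :
    ∫⁻ ω, F (u ω) * G (v ω) ∂m ≤ 2 * C * ENNReal.ofReal (p - 1)⁻¹ := by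
  have h₂' : ∀ B A, MeasurableSet B → MeasurableSet A →
      m (v ⁻¹' B ∩ u ⁻¹' A) ≤ C * ν B * μ A ^ (2 / p - 1) := fun B A hB hA => by
    rw [Set.inter_comm, mul_right_comm]
    exact h₂ A B hA hB
  calc
    _ ≤ ∫⁻ ω, (F (u ω) * min (F (u ω)) (G (v ω)) + G (v ω) * min (G (v ω)) (F (u ω))) ∂m := by
      refine lintegral_mono fun ω => ?_
      rcases le_total (F (u ω)) (G (v ω)) with hle | hle
      · rw [mul_comm, min_eq_right hle]; exact le_add_self
      · rw [min_eq_right hle]; exact le_self_add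
    _ = ∫⁻ ω, F (u ω) * min (F (u ω)) (G (v ω)) ∂m +
          ∫⁻ ω, G (v ω) * min (G (v ω)) (F (u ω)) ∂m := lintegral_add_left (by fun_prop) _
    _ ≤ C * ENNReal.ofReal (p - 1)⁻¹ * 1 + C * ENNReal.ofReal (p - 1)⁻¹ * 1 := by
      gcongr
      · exact (lintegral_mul_min_le hu hv hp1 hp2 h₁ hF hG hG1).trans (by gcongr)
      · exact (lintegral_mul_min_le hv hu hp1 hp2 h₂' hG hF hF1).trans (by gcongr)
    _ = _ := by ring

theorem lintegral_comp_mul_eq_zero {w : Ω → ℝ≥0∞} (hu : Measure.QuasiMeasurePreserving u m μ)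
    (hp : 0 ≤ p) (hF : Measurable F) (hF0 : ∫⁻ x, F x ^ p ∂μ = 0) :
    ∫⁻ ω, F (u ω) * w ω ∂m = 0 := by
  refine lintegral_eq_zero_of_ae_eq_zero ?_
  filter_upwards [hu.ae (ae_eq_zero_of_lintegral_rpow_eq_zero hp hF.aemeasurable hF0)] with ω hω
  simp [hω]

theorem lintegral_mul_le_of_measure_preimage_inter_le [SFinite m] [SFinite μ] [SFinite ν]
    (hu : Measurable u) (hv : Measurable v) (hp1 : 1 < p) (hp2 : p ≤ 2)
    (h₁ : ∀ A B, MeasurableSet A → MeasurableSet B →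
      m (u ⁻¹' A ∩ v ⁻¹' B) ≤ C * μ A * ν B ^ (2 / p - 1))
    (h₂ : ∀ A B, MeasurableSet A → MeasurableSet B →
      m (u ⁻¹' A ∩ v ⁻¹' B) ≤ C * μ A ^ (2 / p - 1) * ν B)
    (hF : Measurable F) (hG : Measurable G) :
    ∫⁻ ω, F (u ω) * G (v ω) ∂m ≤ 2 * C * ENNReal.ofReal (p - 1)⁻¹ *
      (∫⁻ x, F x ^ p ∂μ) ^ (1 / p) * (∫⁻ y, G y ^ p ∂ν) ^ (1 / p) := by
  have hp0 : 0 < p := by linarith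
  have hK : ENNReal.ofReal (p - 1)⁻¹ ≠ 0 := by simpa using hp1
  rcases eq_or_ne C 0 with rfl | hC
  · have hm : m Set.univ = 0 := by simpa using h₁ _ _ MeasurableSet.univ MeasurableSet.univ
    simp [Measure.measure_univ_eq_zero.1 hm]
  have hqu : Measure.QuasiMeasurePreserving u m μ :=
    ⟨hu, .mk fun A hA hA0 => by simpa [Measure.map_apply hu hA, hA0] using h₁ A _ hA .univ⟩
  have hqv : Measure.QuasiMeasurePreserving v m ν :=
    ⟨hv, .mk fun B hB hB0 => by simpa [Measure.map_apply hv hB, hB0] using h₂ _ B .univ hB⟩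
  rcases eq_or_ne (∫⁻ x, F x ^ p ∂μ) 0 with hF0 | hF0
  · exact (lintegral_comp_mul_eq_zero hqu hp0.le hF hF0).trans_le zero_le
  rcases eq_or_ne (∫⁻ y, G y ^ p ∂ν) 0 with hG0 | hG0
  · simp_rw [mul_comm (F _)]
    exact (lintegral_comp_mul_eq_zero hqv hp0.le hG hG0).trans_le zero_le
  rcases eq_or_ne (∫⁻ x, F x ^ p ∂μ) ∞ with hFtop | hFtop
  · have hGr : (∫⁻ y, G y ^ p ∂ν) ^ p⁻¹ ≠ 0 := by simp [hG0, hp0.le]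
    simp [hFtop, hp0, hK, hC, hGr, ENNReal.mul_top, ENNReal.top_mul]
  rcases eq_or_ne (∫⁻ y, G y ^ p ∂ν) ∞ with hGtop | hGtop
  · simp [hGtop, hp0, hK, hC, hF0, hFtop, ENNReal.mul_top]
  calc
    _ = ∫⁻ ω, funMulInvSnorm F p μ (u ω) * funMulInvSnorm G p ν (v ω) *
          ((∫⁻ x, F x ^ p ∂μ) ^ (1 / p) * (∫⁻ y, G y ^ p ∂ν) ^ (1 / p)) ∂m := by
      refine lintegral_congr fun ω => ?_
      rw [fun_eq_funMulInvSnorm_mul_eLpNorm F hF0 hFtop,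
        fun_eq_funMulInvSnorm_mul_eLpNorm G hG0 hGtop, mul_mul_mul_comm]
    _ ≤ _ := by
      have hFm : Measurable (funMulInvSnorm F p μ) := hF.mul_const _
      have hGm : Measurable (funMulInvSnorm G p ν) := hG.mul_const _
      rw [lintegral_mul_const _ (by fun_prop), mul_assoc (2 * C * _)]
      gcongr
      exact lintegral_mul_le_of_lintegral_rpow_le_one hu hv hp1 hp2 h₁ h₂ hFm hGm
        (lintegral_rpow_funMulInvSnorm_eq_one hp0 hF0 hFtop).le
        (lintegral_rpow_funMulInvSnorm_eq_one hp0 hG0 hGtop).le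

end RestrictedType

/-! ### Hölder's inequality and duality -/

theorem lintegral_mul_mul_mul_rpow_le {Ω : Type*} [MeasurableSpace Ω] {m : Measure Ω}
    {r s q e : ℝ} (hr : 0 ≤ r) (hs : 0 ≤ s) (hrs : r + r + s = 1) (hqr : q * r = 1 / 2)
    (hes : e * s = 1 / 2) {f g h w w' : Ω → ℝ≥0∞} (hf : Measurable f) (hg : Measurable g)
    (hh : Measurable h) (hw : Measurable w) (hw' : Measurable w') :
    ∫⁻ ω, f ω * g ω * h ω * (w ω * w' ω) ^ r ∂m ≤
      (∫⁻ ω, f ω ^ q * g ω ^ q * w ω ∂m) ^ r * (∫⁻ ω, g ω ^ q * h ω ^ q * w' ω ∂m) ^ r *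
        (∫⁻ ω, f ω ^ e * h ω ^ e ∂m) ^ s := by
  have hsq (x : ℝ≥0∞) : x ^ (1 / 2 : ℝ) * x ^ (1 / 2 : ℝ) = x := by
    rw [← ENNReal.rpow_add_of_nonneg _ _ (by norm_num) (by norm_num), add_halves, rpow_one]
  have hpoint (ω : Ω) : f ω * g ω * h ω * (w ω * w' ω) ^ r =
      (f ω ^ q * g ω ^ q * w ω) ^ r * (g ω ^ q * h ω ^ q * w' ω) ^ r *
        (f ω ^ e * h ω ^ e) ^ s := by
    simp only [ENNReal.mul_rpow_of_nonneg _ _ hr, ENNReal.mul_rpow_of_nonneg _ _ hs,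
      ← ENNReal.rpow_mul, hqr, hes]
    nth_rw 1 [← hsq (f ω), ← hsq (g ω), ← hsq (h ω)]
    ring
  have holder := ENNReal.lintegral_prod_norm_pow_le (μ := m) Finset.univ
    (f := ![fun ω => f ω ^ q * g ω ^ q * w ω, fun ω => g ω ^ q * h ω ^ q * w' ω,
      fun ω => f ω ^ e * h ω ^ e])
    (fun i _ => by fin_cases i <;> dsimp <;> fun_prop)
    (p := ![r, r, s]) (by simpa [Fin.sum_univ_three] using hrs)
    (fun i _ => by fin_cases i <;> simp [hr, hs])
  simp only [hpoint]
  simpa [Fin.prod_univ_three] using holder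

theorem lintegral_rpow_le_of_forall_lintegral_mul_le {X : Type*} [MeasurableSpace X]
    {μ : Measure X} [SigmaFinite μ] {p q : ℝ} (hpq : p.HolderConjugate q) {T : X → ℝ≥0∞}
    {A : ℝ≥0∞}
    (hT : ∀ h : X → ℝ≥0∞, Measurable h → ∫⁻ x, T x * h x ∂μ ≤ A * (∫⁻ x, h x ^ q ∂μ) ^ (1 / q)) :
    (∫⁻ x, T x ^ p ∂μ) ^ (1 / p) ≤ A := by
  have hsplit (x : ℝ≥0∞) : x ^ (1 / p) * x ^ (1 / q) = x := by
    rw [← ENNReal.rpow_add_of_nonneg _ _ hpq.one_div_nonneg hpq.symm.one_div_nonneg, one_div,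
      one_div, hpq.inv_add_inv_eq_one, rpow_one]
  rw [one_div, ENNReal.rpow_inv_le_iff hpq.pos]
  refine le_of_forall_lt fun L hL => ?_
  rw [lintegral_eq_nnreal] at hL
  simp only [lt_iSup_iff] at hL
  obtain ⟨g₀, hg₀T, hLg₀⟩ := hL
  rw [← SimpleFunc.lintegral_eq_lintegral] at hLg₀
  obtain ⟨g, hgg₀, hgtop, hLg⟩ := SimpleFunc.exists_lt_lintegral_simpleFunc_of_lt_lintegral hLg₀
  have hgT (x : X) : (g x : ℝ≥0∞) ^ (1 / p) ≤ T x := by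
    rw [one_div, ENNReal.rpow_inv_le_iff hpq.pos]
    exact (ENNReal.coe_le_coe.2 (hgg₀ x)).trans (hg₀T x)
  set I := ∫⁻ x, g x ∂μ
  have hI : I ^ (1 / p) * I ^ (1 / q) ≤ A * I ^ (1 / q) := calc
    _ = ∫⁻ x, (g x : ℝ≥0∞) ^ (1 / p) * (g x : ℝ≥0∞) ^ (1 / q) ∂μ := by simp only [hsplit, I]
    _ ≤ ∫⁻ x, T x * (g x : ℝ≥0∞) ^ (1 / q) ∂μ := by gcongr with x; exact hgT x
    _ ≤ A * (∫⁻ x, ((g x : ℝ≥0∞) ^ (1 / q)) ^ q ∂μ) ^ (1 / q) := hT _ (by fun_prop)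
    _ = A * I ^ (1 / q) := by
      simp only [← ENNReal.rpow_mul, one_div_mul_cancel hpq.symm.ne_zero, rpow_one, I]
  have hIq : I ^ (1 / q) ≠ 0 := (ENNReal.rpow_pos (bot_le.trans_lt hLg) hgtop.ne).ne'
  have hIq' : I ^ (1 / q) ≠ ∞ := ENNReal.rpow_ne_top_of_nonneg hpq.symm.one_div_nonneg hgtop.ne
  rw [ENNReal.mul_le_mul_iff_left hIq hIq', one_div, ENNReal.rpow_inv_le_iff hpq.pos] at hI
  exact hLg.trans_le hI

/-! ### Trigonometric changes of variables -/

theorem setLIntegral_comp_mul_enorm_deriv_le {f f' : ℝ → ℝ} {s : Set ℝ} (hs : MeasurableSet s)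
    (hf : ∀ t ∈ s, HasDerivWithinAt f (f' t) s t) (hinj : Set.InjOn f s) (H : ℝ → ℝ≥0∞) :
    ∫⁻ t in s, H (f t) * ‖f' t‖ₑ ≤ ∫⁻ y, H y := by
  calc
    _ = ∫⁻ t in s, ENNReal.ofReal |f' t| * H (f t) := by
      simp only [Real.enorm_eq_ofReal_abs, mul_comm]
    _ = ∫⁻ y in f '' s, H y := (lintegral_image_eq_lintegral_abs_deriv_mul hs hf hinj H).symm
    _ ≤ _ := setLIntegral_le_lintegral _ _

theorem setLIntegral_Ioc_add_eq_of_periodic {T : ℝ} (hT : 0 < T) {f : ℝ → ℝ≥0∞}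
    (hf : Function.Periodic f T) (a b : ℝ) :
    ∫⁻ t in Set.Ioc a (a + T), f t = ∫⁻ t in Set.Ioc b (b + T), f t :=
  (isAddFundamentalDomain_Ioc hT a).setLIntegral_eq (isAddFundamentalDomain_Ioc hT b) f
    hf.map_vadd_zmultiples

/-- The component in the direction `c` of the point of the unit circle at angle `t`, that is
`Re (conj c * exp (i t))`. Its derivative in `t` is the component in the direction `-i c`, so that
`cos`, `sin`, their differences and all derivatives of these have this form. -/
noncomputable def circleComponent (c : ℂ) (t : ℝ) : ℝ := c.re * Real.cos t + c.im * Real.sin t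

/-- Lebesgue measure on the period `(0, 2π]` of the angle. -/
noncomputable def angleMeasure : Measure ℝ := volume.restrict (Set.Ioc 0 (2 * Real.pi))

instance : IsFiniteMeasure angleMeasure := by unfold angleMeasure; infer_instance

theorem angleMeasure_univ_le : angleMeasure Set.univ ≤ 7 := by
  have h7 : 2 * Real.pi ≤ 7 := by linarith [Real.pi_lt_d2]
  simpa [angleMeasure] using ENNReal.ofReal_le_ofReal h7

namespace circleComponent

theorem sub_apply (c d : ℂ) (t : ℝ) :
    circleComponent (c - d) t = circleComponent c t - circleComponent d t := by
  simp only [circleComponent, Complex.sub_re, Complex.sub_im]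
  ring

theorem hasDerivAt (c : ℂ) (t : ℝ) :
    HasDerivAt (circleComponent c) (circleComponent (-Complex.I * c) t) t := by
  refine (((Real.hasDerivAt_cos t).const_mul c.re).add
    ((Real.hasDerivAt_sin t).const_mul c.im)).congr_deriv ?_
  rw [circleComponent, neg_mul, Complex.neg_re, Complex.neg_im, Complex.I_mul_re, Complex.I_mul_im]
  ring

@[fun_prop]
theorem measurable (c : ℂ) : Measurable (circleComponent c) := by
  unfold circleComponent
  fun_prop

theorem antiperiodic (c : ℂ) : Function.Antiperiodic (circleComponent c) Real.pi := fun t => by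
  simp only [circleComponent, Real.cos_add_pi, Real.sin_add_pi]
  ring

theorem periodic (c : ℂ) : Function.Periodic (circleComponent c) (2 * Real.pi) :=
  (antiperiodic c).periodic_two_mul

theorem eq_norm_mul_cos (c : ℂ) (t : ℝ) :
    circleComponent c t = ‖c‖ * Real.cos (t - c.arg) := by
  rw [circleComponent, Real.cos_sub]
  linear_combination -Real.cos t * Complex.norm_mul_cos_arg c -
    Real.sin t * Complex.norm_mul_sin_arg c

theorem sq_add_sq (c : ℂ) (t : ℝ) :
    circleComponent c t ^ 2 + circleComponent (-Complex.I * c) t ^ 2 = ‖c‖ ^ 2 := by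
  simp only [circleComponent, Complex.mul_re, Complex.mul_im, Complex.neg_re, Complex.neg_im,
    Complex.I_re, Complex.I_im, Complex.sq_norm, Complex.normSq_apply]
  linear_combination (c.re ^ 2 + c.im ^ 2) * Real.sin_sq_add_cos_sq t

theorem enorm_le_enorm_add_enorm (c : ℂ) (t : ℝ) :
    ‖c‖ₑ ≤ ‖circleComponent c t‖ₑ + ‖circleComponent (-Complex.I * c) t‖ₑ := by
  have hreal : ‖c‖ ≤ |circleComponent c t| + |circleComponent (-Complex.I * c) t| := by
    refine (sq_le_sq₀ (norm_nonneg c) (by positivity)).1 ?_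
    rw [← sq_add_sq c t, add_sq, sq_abs, sq_abs]
    linarith [mul_nonneg (abs_nonneg (circleComponent c t))
      (abs_nonneg (circleComponent (-Complex.I * c) t))]
  rw [← ofReal_norm, Real.enorm_eq_ofReal_abs, Real.enorm_eq_ofReal_abs,
    ← ENNReal.ofReal_add (abs_nonneg _) (abs_nonneg _)]
  exact ENNReal.ofReal_le_ofReal hreal

theorem injOn_Ioc_arg {c : ℂ} (hc : c ≠ 0) :
    Set.InjOn (circleComponent c) (Set.Ioc c.arg (c.arg + Real.pi)) := by
  intro s hs t ht hst
  rw [eq_norm_mul_cos, eq_norm_mul_cos, mul_right_inj' (norm_ne_zero_iff.2 hc)] at hst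
  have := Real.injOn_cos ⟨by linarith [hs.1], by linarith [hs.2]⟩
    ⟨by linarith [ht.1], by linarith [ht.2]⟩ hst
  linarith

theorem injOn_Ioc_arg_add_pi {c : ℂ} (hc : c ≠ 0) :
    Set.InjOn (circleComponent c) (Set.Ioc (c.arg + Real.pi) (c.arg + 2 * Real.pi)) := by
  intro s hs t ht hst
  have := injOn_Ioc_arg hc ⟨by linarith [hs.1], by linarith [hs.2]⟩
    ⟨by linarith [ht.1], by linarith [ht.2]⟩
    (by rw [(antiperiodic c).sub_eq, (antiperiodic c).sub_eq, hst] :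
      circleComponent c (s - Real.pi) = circleComponent c (t - Real.pi))
  linarith

theorem lintegral_comp_mul_enorm_deriv_le (c : ℂ) (H : ℝ → ℝ≥0∞) :
    ∫⁻ t, H (circleComponent c t) * ‖circleComponent (-Complex.I * c) t‖ₑ ∂angleMeasure ≤
      2 * ∫⁻ y, H y := by
  rcases eq_or_ne c 0 with rfl | hc
  · simp [circleComponent]
  have hper : Function.Periodic
      (fun t => H (circleComponent c t) * ‖circleComponent (-Complex.I * c) t‖ₑ)
      (2 * Real.pi) := fun t => by simp only [periodic _ t]
  have hderiv (s : Set ℝ) : ∀ t ∈ s, HasDerivWithinAt (circleComponent c)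
      (circleComponent (-Complex.I * c) t) s t := fun t _ => (hasDerivAt c t).hasDerivWithinAt
  calc
    _ = ∫⁻ t in Set.Ioc c.arg (c.arg + 2 * Real.pi),
          H (circleComponent c t) * ‖circleComponent (-Complex.I * c) t‖ₑ := by
      rw [setLIntegral_Ioc_add_eq_of_periodic Real.two_pi_pos hper _ 0, zero_add, angleMeasure]
    _ ≤ (∫⁻ t in Set.Ioc c.arg (c.arg + Real.pi),
          H (circleComponent c t) * ‖circleComponent (-Complex.I * c) t‖ₑ) +
        ∫⁻ t in Set.Ioc (c.arg + Real.pi) (c.arg + 2 * Real.pi),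
          H (circleComponent c t) * ‖circleComponent (-Complex.I * c) t‖ₑ := by
      rw [← Set.Ioc_union_Ioc_eq_Ioc (b := c.arg + Real.pi) (by linarith [Real.pi_pos])
        (by linarith [Real.pi_pos])]
      exact lintegral_union_le _ _ _
    _ ≤ (∫⁻ y, H y) + ∫⁻ y, H y := by
      refine add_le_add ?_ ?_
      · exact setLIntegral_comp_mul_enorm_deriv_le measurableSet_Ioc (hderiv _) (injOn_Ioc_arg hc) H
      · exact setLIntegral_comp_mul_enorm_deriv_le measurableSet_Ioc (hderiv _)
          (injOn_Ioc_arg_add_pi hc) H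
    _ = _ := (two_mul _).symm

theorem setLIntegral_preimage_enorm_deriv_le (c : ℂ) {B : Set ℝ} (hB : MeasurableSet B) :
    ∫⁻ t in circleComponent c ⁻¹' B, ‖circleComponent (-Complex.I * c) t‖ₑ ∂angleMeasure ≤
      2 * volume B := by
  calc
    _ = ∫⁻ t, B.indicator 1 (circleComponent c t) * ‖circleComponent (-Complex.I * c) t‖ₑ
          ∂angleMeasure := by
      rw [← lintegral_indicator (measurable c hB)]
      refine lintegral_congr fun t => ?_
      by_cases ht : circleComponent c t ∈ B <;> simp [ht]
    _ ≤ _ := lintegral_comp_mul_enorm_deriv_le c _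
    _ = _ := by rw [lintegral_indicator_one hB]

theorem measure_preimage_closedEBall_le (c : ℂ) (δ : ℝ≥0∞) :
    ‖c‖ₑ * angleMeasure (circleComponent c ⁻¹' Metric.closedEBall 0 δ) ≤ 11 * δ := by
  set S := circleComponent c ⁻¹' Metric.closedEBall 0 δ
  calc
    _ = ∫⁻ _ in S, ‖c‖ₑ ∂angleMeasure := (setLIntegral_const _ _).symm
    _ ≤ ∫⁻ t in S, (δ + ‖circleComponent (-Complex.I * c) t‖ₑ) ∂angleMeasure := by
      refine setLIntegral_mono (by fun_prop) fun t ht => ?_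
      have htδ : ‖circleComponent c t‖ₑ ≤ δ := by simpa [S] using ht
      exact (enorm_le_enorm_add_enorm c t).trans (by gcongr)
    _ = δ * angleMeasure S + ∫⁻ t in S, ‖circleComponent (-Complex.I * c) t‖ₑ ∂angleMeasure := by
      rw [lintegral_add_left measurable_const, setLIntegral_const]
    _ ≤ δ * 7 + 2 * volume (Metric.closedEBall (0 : ℝ) δ) := by
      gcongr
      · exact (measure_mono (Set.subset_univ S)).trans angleMeasure_univ_le
      · exact setLIntegral_preimage_enorm_deriv_le c Metric.isClosed_closedEBall.measurableSet
    _ = _ := by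
      rw [Real.volume_closedEBall]
      ring

theorem mul_measure_preimage_le (c : ℂ) {B : Set ℝ} (hB : MeasurableSet B) (δ : ℝ≥0∞) :
    ‖c‖ₑ * (δ * angleMeasure (circleComponent c ⁻¹' B)) ≤ 11 * δ ^ 2 + 2 * ‖c‖ₑ * volume B := by
  set E := circleComponent c ⁻¹' B
  set c' := -Complex.I * c with hc'
  set S := circleComponent c' ⁻¹' Metric.closedEBall 0 δ
  have hS : MeasurableSet S := measurable c' Metric.isClosed_closedEBall.measurableSet
  have hcS : ‖c‖ₑ * angleMeasure S ≤ 11 * δ := by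
    simpa [S, hc', enorm_mul, ← ofReal_norm Complex.I] using measure_preimage_closedEBall_le c' δ
  have hsplit : δ * angleMeasure E ≤ δ * angleMeasure S + 2 * volume B := calc
    _ = ∫⁻ _ in E, δ ∂angleMeasure := (setLIntegral_const _ _).symm
    _ ≤ ∫⁻ t in E, (S.indicator (fun _ => δ) t + ‖circleComponent c' t‖ₑ) ∂angleMeasure := by
      refine lintegral_mono fun t => ?_
      by_cases ht : t ∈ S
      · simp [ht]
      · have htδ : δ < ‖circleComponent c' t‖ₑ := by simpa [S] using ht
        exact htδ.le.trans le_add_self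
    _ = ∫⁻ t in E, S.indicator (fun _ => δ) t ∂angleMeasure +
          ∫⁻ t in E, ‖circleComponent c' t‖ₑ ∂angleMeasure :=
      lintegral_add_left (measurable_const.indicator hS) _
    _ ≤ _ := by
      gcongr
      · exact (setLIntegral_le_lintegral _ _).trans_eq (lintegral_indicator_const hS δ)
      · exact setLIntegral_preimage_enorm_deriv_le c hB
  calc
    _ ≤ ‖c‖ₑ * (δ * angleMeasure S + 2 * volume B) := by gcongr
    _ = δ * (‖c‖ₑ * angleMeasure S) + 2 * ‖c‖ₑ * volume B := by ring
    _ ≤ δ * (11 * δ) + 2 * ‖c‖ₑ * volume B := by gcongr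
    _ = _ := by ring

theorem measure_preimage_sq_le (c : ℂ) {B : Set ℝ} (hB : MeasurableSet B) :
    ‖c‖ₑ * angleMeasure (circleComponent c ⁻¹' B) ^ 2 ≤ 88 * volume B := by
  have key := mul_measure_preimage_le c hB
  rcases eq_or_ne (volume B) ∞ with hBtop | hBtop
  · simp [hBtop]
  lift volume B to NNReal using hBtop with b
  lift angleMeasure (circleComponent c ⁻¹' B) to NNReal using measure_ne_top _ _ with e
  rcases eq_or_ne c 0 with rfl | hc
  · simp
  -- For this `δ` the term `11 * δ ^ 2` is half of the left-hand side and is absorbed there.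
  specialize key ((‖c‖₊ * e / 22 : NNReal))
  rw [enorm_eq_nnnorm] at key ⊢
  norm_cast at key ⊢
  rw [← NNReal.coe_le_coe] at key ⊢
  have hpos : 0 < ‖c‖ := norm_pos_iff.2 hc
  push_cast at key ⊢
  refine le_of_mul_le_mul_left ?_ hpos
  linarith

theorem measure_preimage_le {c : ℂ} (hc : 1 ≤ ‖c‖) {B : Set ℝ} (hB : MeasurableSet B) :
    angleMeasure (circleComponent c ⁻¹' B) ≤ 10 * volume B ^ (1 / 2 : ℝ) := by
  have hc1 : 1 ≤ ‖c‖ₑ := by simpa [← ofReal_norm] using hc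
  have hsq : angleMeasure (circleComponent c ⁻¹' B) ^ (2 : ℝ) ≤ 10 ^ 2 * volume B := calc
    _ = angleMeasure (circleComponent c ⁻¹' B) ^ 2 := ENNReal.rpow_ofNat _ _
    _ ≤ ‖c‖ₑ * angleMeasure (circleComponent c ⁻¹' B) ^ 2 := le_mul_of_one_le_left' hc1
    _ ≤ 88 * volume B := measure_preimage_sq_le c hB
    _ ≤ _ := by gcongr; norm_num
  rw [← ENNReal.le_rpow_inv_iff two_pos, ENNReal.mul_rpow_of_nonneg _ _ (by norm_num)] at hsq
  convert hsq using 2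
  · rw [← ENNReal.rpow_ofNat, ← ENNReal.rpow_mul]
    norm_num
  · norm_num

end circleComponent

/-! ### The trilinear form -/

theorem rpow_mul_rpow_mul_rpow_eq_three_fifths (K a b d : ℝ≥0∞) :
    (K * a * b) ^ (3 / 10 : ℝ) * (K * b * d) ^ (3 / 10 : ℝ) *
        (K * a ^ (3 / 4 : ℝ) * d ^ (3 / 4 : ℝ)) ^ (2 / 5 : ℝ) =
      K * a ^ (3 / 5 : ℝ) * b ^ (3 / 5 : ℝ) * d ^ (3 / 5 : ℝ) := by
  have hadd {r s t : ℝ} (hr : 0 ≤ r) (hs : 0 ≤ s) (hrs : r + s = t) (x : ℝ≥0∞) :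
      x ^ t = x ^ r * x ^ s := by
    rw [← hrs, ENNReal.rpow_add_of_nonneg _ _ hr hs]
  have h35 := hadd (r := 3 / 10) (s := 3 / 10) (t := 3 / 5) (by norm_num) (by norm_num)
    (by norm_num)
  have hK := hadd (r := 3 / 5) (s := 2 / 5) (t := 1) (by norm_num) (by norm_num) (by norm_num) K
  have h310 : (3 / 4 * (2 / 5) : ℝ) = 3 / 10 := by norm_num
  rw [rpow_one] at hK
  simp only [ENNReal.mul_rpow_of_nonneg _ _ (show (0 : ℝ) ≤ 3 / 10 by norm_num),
    ENNReal.mul_rpow_of_nonneg _ _ (show (0 : ℝ) ≤ 2 / 5 by norm_num), ← ENNReal.rpow_mul, h310]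
  nth_rw 4 [hK]
  simp only [h35]
  ring

theorem sq_add_sq_le_two_mul_abs_mul_add (x y : ℝ) :
    x ^ 2 + y ^ 2 ≤ 2 * (|x * y| + |x * (x + y)| + |y * (x + y)|) := by
  rcases le_total 0 (x * y) with _ | _
  · nlinarith [le_abs_self (x * y), le_abs_self (x * (x + y)), le_abs_self (y * (x + y))]
  rcases le_total (x ^ 2) (y ^ 2) with _ | _
  · nlinarith [neg_le_abs (x * y), neg_le_abs (x * (x + y)), le_abs_self (y * (x + y)),
      sq_nonneg (x + y), abs_nonneg (x * (x + y))]
  · nlinarith [neg_le_abs (x * y), le_abs_self (x * (x + y)), neg_le_abs (y * (x + y)),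
      sq_nonneg (x + y), abs_nonneg (y * (x + y))]

theorem lintegral_prod_sub_mul_sub {X Θ : Type*} [AddCommGroup X] [MeasurableSpace X]
    [MeasurableAdd₂ X] [MeasurableSub₂ X] [MeasurableSpace Θ] {μ : Measure X} [SFinite μ]
    [μ.IsAddRightInvariant] {κ : Measure Θ} [SFinite κ] {a b : Θ → X} (ha : Measurable a)
    (hb : Measurable b) {F G : X → ℝ≥0∞} (hF : Measurable F) (hG : Measurable G)
    {w : Θ → ℝ≥0∞} (hw : Measurable w) :
    ∫⁻ z, F (z.1 - a z.2) * G (z.1 - b z.2) * w z.2 ∂μ.prod κ =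
      ∫⁻ x, F x * ∫⁻ t, G (x + (a t - b t)) * w t ∂κ ∂μ := by
  calc
    _ = ∫⁻ t, (∫⁻ x, F (x - a t) * G (x - b t) * w t ∂μ) ∂κ := by
      rw [lintegral_prod_symm _ (by fun_prop)]
    _ = ∫⁻ t, (∫⁻ x, F x * (G (x + (a t - b t)) * w t) ∂μ) ∂κ := by
      refine lintegral_congr fun t => ?_
      rw [← lintegral_sub_right_eq_self (fun x => F x * (G (x + (a t - b t)) * w t)) (a t)]
      simp only [sub_add_sub_cancel, mul_assoc]
    _ = ∫⁻ x, (∫⁻ t, F x * (G (x + (a t - b t)) * w t) ∂κ) ∂μ :=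
      lintegral_lintegral_swap (by fun_prop)
    _ = _ := lintegral_congr fun x => lintegral_const_mul _ (by fun_prop)

/-- The map `(x, t) ↦ x - circleComponent c t`; for `c = 1`, `c = i` and `c = 0` these are the
arguments `x - cos t`, `x - sin t` and `x` of the three functions in `∫ T(f₁,f₂) h`. -/
noncomputable def circleTranslate (c : ℂ) (z : ℝ × ℝ) : ℝ := z.1 - circleComponent c z.2

/-- The product of the absolute Jacobians of the planar maps
`(x, t) ↦ (circleTranslate c₁ (x, t), circleTranslate c₂ (x, t))` and
`(x, t) ↦ (circleTranslate c₂ (x, t), circleTranslate c₃ (x, t))`, which do not depend on `x`. -/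
noncomputable def jacobianProduct (c₁ c₂ c₃ : ℂ) (t : ℝ) : ℝ≥0∞ :=
  ‖circleComponent (-Complex.I * (c₁ - c₂)) t‖ₑ * ‖circleComponent (-Complex.I * (c₂ - c₃)) t‖ₑ

@[fun_prop]
theorem jacobianProduct.measurable (c₁ c₂ c₃ : ℂ) : Measurable (jacobianProduct c₁ c₂ c₃) := by
  unfold jacobianProduct
  fun_prop

theorem jacobianProduct.one_le_two_mul_add (t : ℝ) :
    1 ≤ 2 * (jacobianProduct 1 0 Complex.I t + jacobianProduct 0 1 Complex.I t +
      jacobianProduct 1 Complex.I 0 t) := by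
  have h_one_zero : jacobianProduct 1 0 Complex.I t = ‖Real.sin t * Real.cos t‖ₑ := by
    simp [jacobianProduct, circleComponent]
  have h_zero_one : jacobianProduct 0 1 Complex.I t =
      ‖Real.sin t * (Real.sin t + Real.cos t)‖ₑ := by
    simp [jacobianProduct, circleComponent, ← neg_add_rev]
  have h_one_I : jacobianProduct 1 Complex.I 0 t =
      ‖Real.cos t * (Real.sin t + Real.cos t)‖ₑ := by
    simp [jacobianProduct, circleComponent, ← neg_add_rev, mul_comm]
  rw [h_one_zero, h_zero_one, h_one_I]
  simp only [Real.enorm_eq_ofReal_abs]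
  rw [← ENNReal.ofReal_add (by positivity) (by positivity),
    ← ENNReal.ofReal_add (by positivity) (by positivity), ← ENNReal.ofReal_ofNat 2,
    ← ENNReal.ofReal_mul zero_le_two, ENNReal.one_le_ofReal, ← Real.sin_sq_add_cos_sq t]
  exact sq_add_sq_le_two_mul_abs_mul_add _ _

theorem jacobianProduct.one_le_two_mul_rpow_add {r : ℝ} (hr : 0 < r) (hr1 : r ≤ 1) (t : ℝ) :
    1 ≤ 2 * (jacobianProduct 1 0 Complex.I t ^ r + jacobianProduct 0 1 Complex.I t ^ r +
      jacobianProduct 1 Complex.I 0 t ^ r) := by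
  calc
    _ ≤ (2 * (jacobianProduct 1 0 Complex.I t + jacobianProduct 0 1 Complex.I t +
          jacobianProduct 1 Complex.I 0 t)) ^ r := ENNReal.one_le_rpow (one_le_two_mul_add t) hr
    _ ≤ _ := by
      rw [ENNReal.mul_rpow_of_nonneg _ _ hr.le]
      gcongr
      · simpa using ENNReal.rpow_le_rpow_of_exponent_le one_le_two hr1
      · exact (ENNReal.rpow_add_le_add_rpow _ _ hr.le hr1).trans
          (by gcongr; exact ENNReal.rpow_add_le_add_rpow _ _ hr.le hr1)

namespace circleTranslate

@[fun_prop]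
theorem measurable (c : ℂ) : Measurable (circleTranslate c) := by
  unfold circleTranslate
  fun_prop

theorem lintegral_mul_mul_eq (c d : ℂ) {F G w : ℝ → ℝ≥0∞} (hF : Measurable F)
    (hG : Measurable G) (hw : Measurable w) :
    ∫⁻ z, F (circleTranslate c z) * G (circleTranslate d z) * w z.2 ∂volume.prod angleMeasure =
      ∫⁻ x, F x * ∫⁻ t, G (x + circleComponent (c - d) t) * w t ∂angleMeasure := by
  simpa only [circleTranslate, circleComponent.sub_apply] using lintegral_prod_sub_mul_sub
    (circleComponent.measurable c) (circleComponent.measurable d) hF hG hw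

theorem lintegral_mul_mul_enorm_deriv_le (c d : ℂ) {F G : ℝ → ℝ≥0∞} (hF : Measurable F)
    (hG : Measurable G) :
    ∫⁻ z, F (circleTranslate c z) * G (circleTranslate d z) *
        ‖circleComponent (-Complex.I * (c - d)) z.2‖ₑ ∂volume.prod angleMeasure ≤
      2 * (∫⁻ x, F x) * ∫⁻ x, G x := by
  calc
    _ = ∫⁻ x, F x * ∫⁻ t, G (x + circleComponent (c - d) t) *
          ‖circleComponent (-Complex.I * (c - d)) t‖ₑ ∂angleMeasure :=
      lintegral_mul_mul_eq c d hF hG (by fun_prop)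
    _ ≤ ∫⁻ x, F x * (2 * ∫⁻ y, G (x + y)) := by
      gcongr with x
      exact circleComponent.lintegral_comp_mul_enorm_deriv_le (c - d) fun y => G (x + y)
    _ = _ := by
      simp only [lintegral_add_left_eq_self G]
      rw [lintegral_mul_const _ hF]
      ring

theorem measure_preimage_inter_le {c d : ℂ} (hcd : 1 ≤ ‖c - d‖) {A B : Set ℝ}
    (hA : MeasurableSet A) (hB : MeasurableSet B) :
    volume.prod angleMeasure (circleTranslate c ⁻¹' A ∩ circleTranslate d ⁻¹' B) ≤
      10 * volume A * volume B ^ (1 / 2 : ℝ) := by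
  have hfibre (x : ℝ) :
      ∫⁻ t, B.indicator 1 (x + circleComponent (c - d) t) ∂angleMeasure ≤
        10 * volume B ^ (1 / 2 : ℝ) := by
    have hBx : MeasurableSet ((x + ·) ⁻¹' B) := measurable_const_add x hB
    calc
      _ = angleMeasure (circleComponent (c - d) ⁻¹' ((x + ·) ⁻¹' B)) := by
        rw [← lintegral_indicator_one (circleComponent.measurable _ hBx)]
        rfl
      _ ≤ 10 * volume ((x + ·) ⁻¹' B) ^ (1 / 2 : ℝ) :=
        circleComponent.measure_preimage_le hcd hBx
      _ = _ := by rw [measure_preimage_add]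
  calc
    _ = ∫⁻ z, A.indicator 1 (circleTranslate c z) * B.indicator 1 (circleTranslate d z) * 1
          ∂volume.prod angleMeasure := by
      rw [← lintegral_indicator_one ((measurable c hA).inter (measurable d hB))]
      simp only [mul_one, Set.inter_indicator_one]
      rfl
    _ = ∫⁻ x, A.indicator 1 x * ∫⁻ t, B.indicator 1 (x + circleComponent (c - d) t) * 1
          ∂angleMeasure :=
      lintegral_mul_mul_eq c d (measurable_one.indicator hA) (measurable_one.indicator hB)
        measurable_const
    _ ≤ ∫⁻ x, A.indicator 1 x * (10 * volume B ^ (1 / 2 : ℝ)) := by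
      gcongr with x
      simpa only [mul_one] using hfibre x
    _ = _ := by
      rw [lintegral_mul_const _ (measurable_one.indicator hA), lintegral_indicator_one hA]
      ring

theorem lintegral_mul_le {c d : ℂ} (hcd : 1 ≤ ‖c - d‖) {F G : ℝ → ℝ≥0∞} (hF : Measurable F)
    (hG : Measurable G) :
    ∫⁻ z, F (circleTranslate c z) * G (circleTranslate d z) ∂volume.prod angleMeasure ≤
      60 * (∫⁻ x, F x ^ (4 / 3 : ℝ)) ^ (3 / 4 : ℝ) * (∫⁻ x, G x ^ (4 / 3 : ℝ)) ^ (3 / 4 : ℝ) := by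
  have hexp : (2 / (4 / 3) - 1 : ℝ) = 1 / 2 := by norm_num
  have hinv : (1 / (4 / 3) : ℝ) = 3 / 4 := by norm_num
  have hconst : (60 : ℝ≥0∞) = 2 * 10 * ENNReal.ofReal (4 / 3 - 1)⁻¹ := by norm_num
  rw [← hinv, hconst]
  refine lintegral_mul_le_of_measure_preimage_inter_le (measurable c) (measurable d)
    (by norm_num) (by norm_num) (fun A B hA hB => ?_) (fun A B hA hB => ?_) hF hG
  · rw [hexp]
    exact measure_preimage_inter_le hcd hA hB
  · rw [hexp, Set.inter_comm, mul_right_comm]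
    exact measure_preimage_inter_le (by rwa [norm_sub_rev]) hB hA

theorem lintegral_mul_mul_mul_jacobianProduct_le {c₁ c₂ c₃ : ℂ} (hc : 1 ≤ ‖c₁ - c₃‖)
    {f g h : ℝ → ℝ≥0∞} (hf : Measurable f) (hg : Measurable g) (hh : Measurable h) :
    ∫⁻ z, f (circleTranslate c₁ z) * g (circleTranslate c₂ z) * h (circleTranslate c₃ z) *
        jacobianProduct c₁ c₂ c₃ z.2 ^ (3 / 10 : ℝ) ∂volume.prod angleMeasure ≤
      60 * (∫⁻ x, f x ^ (5 / 3 : ℝ)) ^ (3 / 5 : ℝ) * (∫⁻ x, g x ^ (5 / 3 : ℝ)) ^ (3 / 5 : ℝ) *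
        (∫⁻ x, h x ^ (5 / 3 : ℝ)) ^ (3 / 5 : ℝ) := by
  have h12 := lintegral_mul_mul_enorm_deriv_le c₁ c₂
    (hf.pow_const (5 / 3 : ℝ)) (hg.pow_const (5 / 3 : ℝ))
  have h23 := lintegral_mul_mul_enorm_deriv_le c₂ c₃
    (hg.pow_const (5 / 3 : ℝ)) (hh.pow_const (5 / 3 : ℝ))
  have h13 := lintegral_mul_le hc (hf.pow_const (5 / 4 : ℝ)) (hh.pow_const (5 / 4 : ℝ))
  have h543 : (5 / 4 * (4 / 3) : ℝ) = 5 / 3 := by norm_num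
  simp only [← ENNReal.rpow_mul, h543] at h13
  set a := ∫⁻ x, f x ^ (5 / 3 : ℝ)
  set b := ∫⁻ x, g x ^ (5 / 3 : ℝ)
  set d := ∫⁻ x, h x ^ (5 / 3 : ℝ)
  calc
    _ ≤ _ := lintegral_mul_mul_mul_rpow_le (r := 3 / 10) (s := 2 / 5) (q := 5 / 3) (e := 5 / 4)
      (by norm_num) (by norm_num) (by norm_num) (by norm_num) (by norm_num) (by fun_prop)
      (by fun_prop) (by fun_prop) (by fun_prop) (by fun_prop)
    _ ≤ (60 * a * b) ^ (3 / 10 : ℝ) * (60 * b * d) ^ (3 / 10 : ℝ) *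
          (60 * a ^ (3 / 4 : ℝ) * d ^ (3 / 4 : ℝ)) ^ (2 / 5 : ℝ) := by
      gcongr
      · exact h12.trans (by gcongr; norm_num)
      · exact h23.trans (by gcongr; norm_num)
    _ = _ := rpow_mul_rpow_mul_rpow_eq_three_fifths 60 a b d

theorem lintegral_mul_mul_le {f g h : ℝ → ℝ≥0∞} (hf : Measurable f) (hg : Measurable g)
    (hh : Measurable h) :
    ∫⁻ z, f (circleTranslate 1 z) * g (circleTranslate Complex.I z) * h (circleTranslate 0 z)
        ∂volume.prod angleMeasure ≤
      360 * (∫⁻ x, f x ^ (5 / 3 : ℝ)) ^ (3 / 5 : ℝ) * (∫⁻ x, g x ^ (5 / 3 : ℝ)) ^ (3 / 5 : ℝ) *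
        (∫⁻ x, h x ^ (5 / 3 : ℝ)) ^ (3 / 5 : ℝ) := by
  have hdist : 1 ≤ ‖(1 : ℂ) - Complex.I‖ := by simpa using Complex.abs_re_le_norm (1 - Complex.I)
  have hfhg := lintegral_mul_mul_mul_jacobianProduct_le (c₂ := 0) hdist hf hh hg
  have hhfg := lintegral_mul_mul_mul_jacobianProduct_le (c₁ := 0) (c₂ := 1) (c₃ := Complex.I)
    (by simp) hh hf hg
  have hfgh := lintegral_mul_mul_mul_jacobianProduct_le (c₁ := 1) (c₂ := Complex.I) (c₃ := 0)
    (by simp) hf hg hh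
  set a := (∫⁻ x, f x ^ (5 / 3 : ℝ)) ^ (3 / 5 : ℝ)
  set b := (∫⁻ x, g x ^ (5 / 3 : ℝ)) ^ (3 / 5 : ℝ)
  set d := (∫⁻ x, h x ^ (5 / 3 : ℝ)) ^ (3 / 5 : ℝ)
  set F := fun z => f (circleTranslate 1 z)
  set G := fun z => g (circleTranslate Complex.I z)
  set H := fun z => h (circleTranslate 0 z)
  calc
    _ ≤ ∫⁻ z, 2 * (F z * H z * G z * jacobianProduct 1 0 Complex.I z.2 ^ (3 / 10 : ℝ) +
          H z * F z * G z * jacobianProduct 0 1 Complex.I z.2 ^ (3 / 10 : ℝ) +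
          F z * G z * H z * jacobianProduct 1 Complex.I 0 z.2 ^ (3 / 10 : ℝ))
          ∂volume.prod angleMeasure := by
      refine lintegral_mono fun z => ?_
      calc
        _ ≤ F z * G z * H z * _ := le_mul_of_one_le_right' <|
          jacobianProduct.one_le_two_mul_rpow_add (r := 3 / 10) (by norm_num) (by norm_num) z.2
        _ = _ := by ring
    _ ≤ 2 * (60 * a * d * b + 60 * d * a * b + 60 * a * b * d) := by
      rw [lintegral_const_mul _ (by fun_prop), lintegral_add_left (by fun_prop),
        lintegral_add_left (by fun_prop)]
      gcongr
    _ = _ := by ring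

end circleTranslate

theorem lintegral_T2_mul_le {f₁ f₂ : ℝ → ℝ} (hf₁ : Measurable f₁) (hf₂ : Measurable f₂)
    {h : ℝ → ℝ≥0∞} (hh : Measurable h) :
    ∫⁻ x, T2 f₁ f₂ x * h x ≤
      360 * (∫⁻ x, ENNReal.ofReal (f₁ x) ^ (5 / 3 : ℝ)) ^ (3 / 5 : ℝ) *
        (∫⁻ x, ENNReal.ofReal (f₂ x) ^ (5 / 3 : ℝ)) ^ (3 / 5 : ℝ) *
        (∫⁻ x, h x ^ (5 / 3 : ℝ)) ^ (3 / 5 : ℝ) := by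
  have hpi : (ENNReal.ofReal (2 * Real.pi))⁻¹ ≤ 1 := by
    rw [ENNReal.inv_le_one, ENNReal.one_le_ofReal]
    linarith [Real.two_le_pi]
  calc
    _ ≤ ∫⁻ x, (∫⁻ t, ENNReal.ofReal (f₁ (x - Real.cos t)) * ENNReal.ofReal (f₂ (x - Real.sin t)) *
          h x ∂angleMeasure) := by
      gcongr with x
      rw [T2, lintegral_mul_const _ (by fun_prop)]
      gcongr
      exact mul_le_of_le_one_left' hpi
    _ = ∫⁻ z, ENNReal.ofReal (f₁ (circleTranslate 1 z)) *
          ENNReal.ofReal (f₂ (circleTranslate Complex.I z)) * h (circleTranslate 0 z)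
          ∂volume.prod angleMeasure := by
      rw [lintegral_prod _ (by fun_prop)]
      simp [circleTranslate, circleComponent]
    _ ≤ _ := circleTranslate.lintegral_mul_mul_le hf₁.ennreal_ofReal hf₂.ennreal_ofReal hh

theorem lpNorm_ofReal {p : ℝ} (hp : 0 ≤ p) (g : ℝ → ℝ≥0∞) :
    lpNorm (ENNReal.ofReal p) g = (∫⁻ x, g x ^ p) ^ (1 / p) := by
  rw [_root_.lpNorm, if_neg ENNReal.ofReal_ne_top, ENNReal.toReal_ofReal hp]

theorem strong_type_at_M :
    ∃ C : ℝ, 0 < C ∧ ∀ f₁ f₂ : ℝ → ℝ, Measurable f₁ → Measurable f₂ →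
      (∀ x, 0 ≤ f₁ x) → (∀ x, 0 ≤ f₂ x) →
      lpNorm (5 / 2) (T2 f₁ f₂) ≤ ENNReal.ofReal C *
        lpNorm (5 / 3) (fun x => ENNReal.ofReal (f₁ x)) *
        lpNorm (5 / 3) (fun x => ENNReal.ofReal (f₂ x)) := by
  refine ⟨360, by norm_num, fun f₁ f₂ hf₁ hf₂ _ _ => ?_⟩
  have h52 : (5 / 2 : ℝ≥0∞) = ENNReal.ofReal (5 / 2) := by
    rw [ENNReal.ofReal_div_of_pos two_pos, ENNReal.ofReal_ofNat, ENNReal.ofReal_ofNat]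
  have h53 : (5 / 3 : ℝ≥0∞) = ENNReal.ofReal (5 / 3) := by
    rw [ENNReal.ofReal_div_of_pos three_pos, ENNReal.ofReal_ofNat, ENNReal.ofReal_ofNat]
  have h35 : (1 / (5 / 3) : ℝ) = 3 / 5 := by norm_num
  have hconj : (5 / 2 : ℝ).HolderConjugate (5 / 3) := by
    rw [Real.holderConjugate_iff]; norm_num
  rw [h52, h53, lpNorm_ofReal (by norm_num), lpNorm_ofReal (by norm_num),
    lpNorm_ofReal (by norm_num), h35, ENNReal.ofReal_ofNat]
  refine lintegral_rpow_le_of_forall_lintegral_mul_le hconj fun h hh => ?_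
  rw [h35]
  exact lintegral_T2_mul_le hf₁ hf₂ hh
end

section
/- There is no finite constant C > 0 such that ‖T(f₁,f₂)‖_1 ≤ C ‖f₁‖_2 ‖f₂‖_1 holds for all nonnegative measurable functions f₁, f₂ on ℝ; that is, in dimension n = 2 the bilinear spherical average T fails to be of strong type at the point P = (1/2, 1; 1). -/
open MeasureTheory ENNReal

/-!
Fubini and a translation give `‖T(f₁, f₂)‖₁ = ∫ A f₁ · f₂`, where `A` is convolution with the
arcsine law, the law of `sin t - cos t = √2 cos (t - 3π/4)`. If `f₁` is lower semicontinuous, so is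
`A f₁`, and testing a strong type bound on indicators `f₂` of small open sets yields
`A f₁ (0) ≤ C ‖f₁‖₂`. The arcsine density just fails to be square integrable at the endpoint `√2`:
for `f₁ u = (√2 - u) ^ s` on `√2 - 1 < u < √2` and `N = 1 / (2 s + 1)`, one has `‖f₁‖₂ = √N`, while
`√2 - √2 cos θ ≤ θ ^ 2` gives `2 π A f₁ (0) ≥ N`. As `s → -1/2`, `N` becomes arbitrarily large.
-/

section LowerSemicontinuous

variable {X : Type*} [TopologicalSpace X]

lemma lowerSemicontinuous_lintegral [FirstCountableTopology X] {α : Type*} [MeasurableSpace α]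
    {μ : Measure α} {F : X → α → ℝ≥0∞} (hmeas : ∀ x, Measurable (F x))
    (hlsc : ∀ a, LowerSemicontinuous fun x => F x a) :
    LowerSemicontinuous fun x => ∫⁻ a, F x a ∂μ :=
  lowerSemicontinuous_iff_le_liminf.2 fun x =>
    (lintegral_mono fun a => (hlsc a).le_liminf x).trans (lintegral_liminf_le hmeas)

lemma le_of_forall_isOpen_setLIntegral_le [MeasurableSpace X] [OpensMeasurableSpace X]
    {μ : Measure X} [μ.IsOpenPosMeasure] [IsLocallyFiniteMeasure μ] {φ : X → ℝ≥0∞}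
    (hφ : LowerSemicontinuous φ) {C : ℝ≥0∞}
    (h : ∀ U, IsOpen U → ∫⁻ x in U, φ x ∂μ ≤ C * μ U) (x : X) : φ x ≤ C := by
  by_contra! hlt
  obtain ⟨b, hCb, hbφ⟩ := exists_between hlt
  obtain ⟨V, hxV, hV, hVfin⟩ := μ.exists_isOpen_measure_lt_top x
  set U : Set X := φ ⁻¹' Set.Ioi b ∩ V
  have hU : IsOpen U := (hφ.isOpen_preimage b).inter hV
  have hU0 : μ U ≠ 0 := (hU.measure_pos μ ⟨x, hbφ, hxV⟩).ne'
  have hUfin : μ U ≠ ∞ := measure_ne_top_of_subset Set.inter_subset_right hVfin.ne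
  have hbC : b * μ U ≤ C * μ U :=
    calc b * μ U = ∫⁻ _ in U, b ∂μ := (setLIntegral_const U b).symm
      _ ≤ ∫⁻ y in U, φ y ∂μ := setLIntegral_mono' hU.measurableSet fun y hy => hy.1.le
      _ ≤ C * μ U := h U hU
  exact hCb.not_ge ((ENNReal.mul_le_mul_iff_left hU0 hUfin).1 hbC)

lemma lowerSemicontinuous_indicator_of_continuousOn {γ : Type*} [TopologicalSpace γ]
    [LinearOrder γ] [OrderTopology γ] [Zero γ] {U : Set X} (hU : IsOpen U) {f : X → γ}
    (hf : ContinuousOn f U) (hf0 : ∀ x ∈ U, 0 ≤ f x) : LowerSemicontinuous (U.indicator f) := by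
  intro x
  by_cases hx : x ∈ U
  · have hfU : U.indicator f =ᶠ[nhds x] f := Set.eqOn_indicator.eventuallyEq_of_mem (hU.mem_nhds hx)
    exact ((hf.continuousAt (hU.mem_nhds hx)).congr hfU.symm).lowerSemicontinuousAt
  · intro y hy
    rw [Set.indicator_of_notMem hx] at hy
    exact .of_forall fun z => hy.trans_le (Set.indicator_nonneg hf0 z)

end LowerSemicontinuous

lemma lpNorm_one (g : ℝ → ℝ≥0∞) : _root_.lpNorm 1 g = ∫⁻ x, g x := by
  simp [_root_.lpNorm]

lemma lpNorm_two (g : ℝ → ℝ≥0∞) :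
    _root_.lpNorm 2 g = (∫⁻ x, g x ^ 2) ^ (1 / 2 : ℝ) := by
  simp [_root_.lpNorm]

lemma ofReal_indicator_one {α : Type*} (s : Set α) (x : α) :
    ENNReal.ofReal (s.indicator 1 x) = s.indicator 1 x := by
  by_cases hx : x ∈ s <;> simp [hx]

lemma lpNorm_one_ofReal_indicator_one {s : Set ℝ} (hs : MeasurableSet s) :
    _root_.lpNorm 1 (fun x => ENNReal.ofReal (s.indicator 1 x)) = volume s := by
  simp only [lpNorm_one, ofReal_indicator_one, lintegral_indicator_one hs]

/-- The average `(1/(2π)) ∫₀^{2π} f(y + sin t - cos t) dt`, that is, the convolution of `f` with the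
arcsine law on `[-√2, √2]`. The linear operator `f ↦ arcsineAverage f` is what remains of `T2` after
pairing with the second argument. -/
noncomputable def arcsineAverage (f : ℝ → ℝ) (y : ℝ) : ℝ≥0∞ :=
  (ENNReal.ofReal (2 * Real.pi))⁻¹ *
    ∫⁻ t in Set.Ioc 0 (2 * Real.pi), ENNReal.ofReal (f (y + (Real.sin t - Real.cos t)))

lemma lpNorm_one_T2 {f₁ f₂ : ℝ → ℝ} (h₁ : Measurable f₁) (h₂ : Measurable f₂) :
    _root_.lpNorm 1 (T2 f₁ f₂) = ∫⁻ y, arcsineAverage f₁ y * ENNReal.ofReal (f₂ y) := by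
  have htranslate (t : ℝ) :
      ∫⁻ x, ENNReal.ofReal (f₁ (x - Real.cos t)) * ENNReal.ofReal (f₂ (x - Real.sin t)) =
        ∫⁻ y, ENNReal.ofReal (f₁ (y + (Real.sin t - Real.cos t))) * ENNReal.ofReal (f₂ y) := by
    rw [← lintegral_add_right_eq_self _ (Real.sin t)]
    simp only [add_sub_assoc, sub_self, add_zero]
  have hπ : (ENNReal.ofReal (2 * Real.pi))⁻¹ ≠ ∞ := by simp [Real.pi_pos]
  simp only [lpNorm_one, T2, arcsineAverage, mul_assoc]
  rw [lintegral_const_mul' _ _ hπ, lintegral_const_mul' _ _ hπ,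
    lintegral_lintegral_swap (by fun_prop)]
  simp only [htranslate]
  rw [lintegral_lintegral_swap (by fun_prop)]
  simp only [lintegral_mul_const' _ _ ENNReal.ofReal_ne_top]

lemma lpNorm_one_T2_indicator_one {f : ℝ → ℝ} (hf : Measurable f) {s : Set ℝ}
    (hs : MeasurableSet s) :
    _root_.lpNorm 1 (T2 f (s.indicator 1)) = ∫⁻ y in s, arcsineAverage f y := by
  rw [lpNorm_one_T2 hf (measurable_one.indicator hs), ← lintegral_indicator hs]
  simp only [ofReal_indicator_one, ← Set.indicator_mul_right, Pi.one_apply, mul_one]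

lemma lowerSemicontinuous_arcsineAverage {f : ℝ → ℝ} (hf : LowerSemicontinuous f) :
    LowerSemicontinuous (arcsineAverage f) := by
  have hf' : LowerSemicontinuous fun x => ENNReal.ofReal (f x) :=
    ENNReal.continuous_ofReal.comp_lowerSemicontinuous hf ENNReal.ofReal_mono
  have hint : LowerSemicontinuous fun y => ∫⁻ t in Set.Ioc 0 (2 * Real.pi),
      ENNReal.ofReal (f (y + (Real.sin t - Real.cos t))) :=
    lowerSemicontinuous_lintegral (fun y => hf'.measurable.comp (by fun_prop))
      fun t => hf'.comp (by fun_prop)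
  exact (ENNReal.continuous_const_mul (by simp [Real.pi_pos])).comp_lowerSemicontinuous hint
    fun _ _ h => mul_le_mul_right h _

lemma arcsineAverage_le_of_forall_isOpen {f : ℝ → ℝ} (hf : LowerSemicontinuous f) {C : ℝ≥0∞}
    (h : ∀ U, IsOpen U → _root_.lpNorm 1 (T2 f (U.indicator 1)) ≤ C * volume U) (y : ℝ) :
    arcsineAverage f y ≤ C :=
  le_of_forall_isOpen_setLIntegral_le (lowerSemicontinuous_arcsineAverage hf)
    (fun U hU => lpNorm_one_T2_indicator_one hf.measurable hU.measurableSet ▸ h U hU) y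

/-- The power `v ↦ v ^ s` cut off to the open interval `(0, 1)`. The interval is open so that the
function is lower semicontinuous. -/
noncomputable def unitPower (s : ℝ) : ℝ → ℝ :=
  (Set.Ioo 0 1).indicator fun v => v ^ s

lemma unitPower_nonneg (s v : ℝ) : 0 ≤ unitPower s v :=
  Set.indicator_nonneg (fun _ hv => Real.rpow_nonneg hv.1.le s) v

lemma lowerSemicontinuous_unitPower (s : ℝ) : LowerSemicontinuous (unitPower s) :=
  lowerSemicontinuous_indicator_of_continuousOn isOpen_Ioo
    (fun v hv => (Real.continuousAt_rpow_const v s (.inl hv.1.ne')).continuousWithinAt)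
    fun _ hv => Real.rpow_nonneg hv.1.le s

lemma unitPower_sq (s v : ℝ) : unitPower s v ^ 2 = unitPower (2 * s) v := by
  by_cases hv : v ∈ Set.Ioo 0 1
  · simp only [unitPower, Set.indicator_of_mem hv]
    rw [mul_comm, Real.rpow_mul hv.1.le, Real.rpow_two]
  · simp [unitPower, hv]

lemma lintegral_unitPower {s : ℝ} (hs : -1 < s) :
    ∫⁻ v, ENNReal.ofReal (unitPower s v) = ENNReal.ofReal (s + 1)⁻¹ := by
  have hint : Integrable (unitPower s) :=
    (integrable_indicator_iff measurableSet_Ioo).2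
      ((intervalIntegral.integrableOn_Ioo_rpow_iff one_pos).2 hs)
  rw [← ofReal_integral_eq_lintegral_ofReal hint (.of_forall (unitPower_nonneg s)), unitPower,
    integral_indicator measurableSet_Ioo, ← integral_Ioc_eq_integral_Ioo,
    ← intervalIntegral.integral_of_le zero_le_one, integral_rpow (.inl hs), Real.one_rpow,
    Real.zero_rpow (by linarith), sub_zero, one_div]

lemma lpNorm_two_unitPower_const_sub {s : ℝ} (hs : -1 < 2 * s) (a : ℝ) :
    _root_.lpNorm 2 (fun x => ENNReal.ofReal (unitPower s (a - x))) =
      ENNReal.ofReal √(2 * s + 1)⁻¹ := by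
  have hpos : 0 ≤ (2 * s + 1)⁻¹ := inv_nonneg.2 (by linarith)
  simp only [lpNorm_two, ← ENNReal.ofReal_pow (unitPower_nonneg _ _), unitPower_sq]
  rw [lintegral_sub_left_eq_self (fun v => ENNReal.ofReal (unitPower (2 * s) v)),
    lintegral_unitPower hs, ENNReal.ofReal_rpow_of_nonneg hpos (by norm_num), Real.sqrt_eq_rpow]

lemma sin_sub_cos_eq (t : ℝ) :
    Real.sin t - Real.cos t = √2 * Real.cos (t - 3 * Real.pi / 4) := by
  have h : 3 * Real.pi / 4 = Real.pi - Real.pi / 4 := by ring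
  rw [Real.cos_sub, h, Real.sin_pi_sub, Real.cos_pi_sub, Real.sin_pi_div_four,
    Real.cos_pi_div_four]
  linear_combination (Real.cos t - Real.sin t) / 2 * Real.sq_sqrt zero_le_two

lemma unitPower_two_mul_le {s : ℝ} (hs : s ≤ 0) (θ : ℝ) :
    unitPower (2 * s) θ ≤ unitPower s (√2 - √2 * Real.cos θ) := by
  refine Set.indicator_apply_le' (fun hθ => ?_) fun _ => unitPower_nonneg _ _
  have hsqrt0 : 0 < √(2 : ℝ) := by positivity
  have hsqrt2 : √(2 : ℝ) ≤ 2 := Real.sqrt_le_left zero_le_two |>.2 (by norm_num)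
  have hcos : Real.cos θ < 1 := by
    rw [← Real.cos_zero]
    exact Real.cos_lt_cos_of_nonneg_of_le_pi le_rfl (by linarith [hθ.2, Real.pi_gt_three]) hθ.1
  have hpos : 0 < √2 - √2 * Real.cos θ := by nlinarith
  have hle : √2 - √2 * Real.cos θ ≤ θ ^ 2 := by
    nlinarith [Real.one_sub_sq_div_two_le_cos (x := θ)]
  have hmem : √2 - √2 * Real.cos θ ∈ Set.Ioo 0 1 :=
    ⟨hpos, hle.trans_lt (pow_lt_one₀ hθ.1.le hθ.2 two_ne_zero)⟩
  calc θ ^ (2 * s) = (θ ^ 2) ^ s := by rw [Real.rpow_mul hθ.1.le, Real.rpow_two]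
    _ ≤ (√2 - √2 * Real.cos θ) ^ s := Real.rpow_le_rpow_of_nonpos hpos hle hs
    _ = unitPower s (√2 - √2 * Real.cos θ) := by rw [unitPower, Set.indicator_of_mem hmem]

lemma le_arcsineAverage_unitPower {s : ℝ} (hs : -1 < 2 * s) (hs0 : s ≤ 0) :
    (ENNReal.ofReal (2 * Real.pi))⁻¹ * ENNReal.ofReal (2 * s + 1)⁻¹ ≤
      arcsineAverage (fun x => unitPower s (√2 - x)) 0 := by
  have hsupport : Function.support
      (fun t => ENNReal.ofReal (unitPower (2 * s) (t - 3 * Real.pi / 4))) ⊆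
        Set.Ioc 0 (2 * Real.pi) := by
    intro t ht
    have hmem : t - 3 * Real.pi / 4 ∈ Set.Ioo 0 1 := by
      by_contra hnot
      simp [unitPower, hnot] at ht
    constructor <;> linarith [hmem.1, hmem.2, Real.pi_gt_three]
  unfold arcsineAverage
  gcongr
  calc ENNReal.ofReal (2 * s + 1)⁻¹
      = ∫⁻ t, ENNReal.ofReal (unitPower (2 * s) (t - 3 * Real.pi / 4)) := by
        rw [lintegral_sub_right_eq_self fun θ => ENNReal.ofReal (unitPower (2 * s) θ),
          lintegral_unitPower hs]
    _ = ∫⁻ t in Set.Ioc 0 (2 * Real.pi),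
          ENNReal.ofReal (unitPower (2 * s) (t - 3 * Real.pi / 4)) :=
        (setLIntegral_eq_of_support_subset hsupport).symm
    _ ≤ ∫⁻ t in Set.Ioc 0 (2 * Real.pi),
          ENNReal.ofReal (unitPower s (√2 - (0 + (Real.sin t - Real.cos t)))) :=
        lintegral_mono fun t => ENNReal.ofReal_le_ofReal <| by
          rw [zero_add, sin_sub_cos_eq]
          exact unitPower_two_mul_le hs0 _

lemma sqrt_le_of_arcsineAverage_unitPower_le {s : ℝ} (hs : -1 < 2 * s) (hs0 : s ≤ 0) {C : ℝ}
    (hC : 0 ≤ C)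
    (h : arcsineAverage (fun x => unitPower s (√2 - x)) 0 ≤
      ENNReal.ofReal C * _root_.lpNorm 2 (fun x => ENNReal.ofReal (unitPower s (√2 - x)))) :
    √(2 * s + 1)⁻¹ ≤ 2 * Real.pi * C := by
  have hN : 0 < (2 * s + 1)⁻¹ := inv_pos.2 (by linarith)
  have hreal : (2 * Real.pi)⁻¹ * (2 * s + 1)⁻¹ ≤ C * √(2 * s + 1)⁻¹ := by
    have hofReal := (le_arcsineAverage_unitPower hs hs0).trans h
    rwa [lpNorm_two_unitPower_const_sub hs, ← ENNReal.ofReal_inv_of_pos Real.two_pi_pos,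
      ← ENNReal.ofReal_mul (by positivity), ← ENNReal.ofReal_mul hC,
      ENNReal.ofReal_le_ofReal_iff (by positivity)] at hofReal
  refine le_of_mul_le_mul_right ?_ (Real.sqrt_pos.2 hN)
  calc √(2 * s + 1)⁻¹ * √(2 * s + 1)⁻¹ = (2 * s + 1)⁻¹ := Real.mul_self_sqrt hN.le
    _ ≤ 2 * Real.pi * (C * √(2 * s + 1)⁻¹) := (inv_mul_le_iff₀ Real.two_pi_pos).1 hreal
    _ = 2 * Real.pi * C * √(2 * s + 1)⁻¹ := (mul_assoc _ _ _).symm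

lemma exists_lt_sqrt_inv_two_mul_add_one (K : ℝ) :
    ∃ s : ℝ, -1 < 2 * s ∧ s ≤ 0 ∧ K < √(2 * s + 1)⁻¹ := by
  have hpos : 0 < ((|K| + 1) ^ 2)⁻¹ := by positivity
  have hle : ((|K| + 1) ^ 2)⁻¹ ≤ 1 := inv_le_one_of_one_le₀ (one_le_pow₀ (by simp))
  refine ⟨(((|K| + 1) ^ 2)⁻¹ - 1) / 2, by linarith, by linarith, ?_⟩
  rw [mul_div_cancel₀ _ two_ne_zero, sub_add_cancel, inv_inv, Real.sqrt_sq (by positivity)]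
  linarith [le_abs_self K]

theorem not_strong_type_at_P :
    ¬ ∃ C : ℝ, 0 < C ∧ ∀ f₁ f₂ : ℝ → ℝ, Measurable f₁ → Measurable f₂ →
      (∀ x, 0 ≤ f₁ x) → (∀ x, 0 ≤ f₂ x) →
      lpNorm 1 (T2 f₁ f₂) ≤ ENNReal.ofReal C *
        lpNorm 2 (fun x => ENNReal.ofReal (f₁ x)) *
        lpNorm 1 (fun x => ENNReal.ofReal (f₂ x)) := by
  rintro ⟨C, hC, hbound⟩
  obtain ⟨s, hs, hs0, hlarge⟩ := exists_lt_sqrt_inv_two_mul_add_one (2 * Real.pi * C)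
  have hlsc : LowerSemicontinuous fun x => unitPower s (√2 - x) :=
    (lowerSemicontinuous_unitPower s).comp (by fun_prop)
  have hpointwise : arcsineAverage (fun x => unitPower s (√2 - x)) 0 ≤
      ENNReal.ofReal C * lpNorm 2 (fun x => ENNReal.ofReal (unitPower s (√2 - x))) := by
    refine arcsineAverage_le_of_forall_isOpen hlsc (fun U hU => ?_) 0
    rw [← lpNorm_one_ofReal_indicator_one hU.measurableSet]
    exact hbound _ _ hlsc.measurable (measurable_one.indicator hU.measurableSet)
      (fun _ => unitPower_nonneg _ _) (Set.indicator_nonneg fun _ _ => zero_le_one)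
  exact hlarge.not_ge (sqrt_le_of_arcsineAverage_unitPower_le hs hs0 hC.le hpointwise)
end

section
/- There exists a finite constant C > 0 such that for every measurable set E ⊆ ℝ of finite Lebesgue measure and every nonnegative measurable function f₂ on ℝ, ‖T(χ_E, f₂)‖_{3/2} ≤ C |E|^{1/3} ‖f₂‖_1; that is, in dimension n = 2 the operator T is of restricted type at the point G = (1/3, 1; 2/3). -/
open MeasureTheory ENNReal

/-!
Hölder's inequality with the weight `|cos t|` bounds `T(f₁, f₂)(x) ^ (3/2)` by
`∫ f₁(x - cos t) ^ (3/2) |cos t| ^ (-1/2) f₂(x - sin t) dt` times the square root of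
`∫ |cos t| f₂(x - sin t) dt ≤ 2 ‖f₂‖₁`. Integrating in `x` and substituting `y = x - sin t`, one
is left with the integral of `f₁(y + ·) ^ (3/2)` against the image of `|cos t| ^ (-1/2) dt` under
`u = sin t - cos t`. The Jacobian of this map is `sin t + cos t`, and since
`u² - 1 = -2 sin t cos t` and `2 - u² = (sin t + cos t)²`, the density of the image is
`O(|(u² - 1) (u² - 2)| ^ (-1/2))`. By partial fractions and subadditivity of the square root this
is at most a sum of `|u - a| ^ (-1/2)` over `a = ±1, ±√2`, so everything is controlled by the
Riesz potential of order `1/2` of `f₁ ^ (3/2)`; for `f₁ = χ_E` it is at most `5 |E| ^ (1/2)`.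
-/

section RieszPotential

/-- The (unnormalised) Riesz potential `I_α g (x) = ∫ g(s) |s - x|^(α - 1) ds` on the real line.
The kernel is taken in `ℝ≥0∞`, so for `α < 1` it is `∞` at `s = x`. -/
noncomputable def rieszPotential (α : ℝ) (g : ℝ → ℝ≥0∞) (x : ℝ) : ℝ≥0∞ :=
  ∫⁻ s, g s * ‖s - x‖ₑ ^ (α - 1)

lemma rieszPotential_comp_const_add (α : ℝ) (g : ℝ → ℝ≥0∞) (y x : ℝ) :
    rieszPotential α (fun s ↦ g (y + s)) x = rieszPotential α g (y + x) := by
  rw [rieszPotential, rieszPotential,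
    ← lintegral_add_left_eq_self (fun s ↦ g s * ‖s - (y + x)‖ₑ ^ (α - 1)) y]
  simp only [add_sub_add_left_eq_sub]

lemma rieszPotential_indicator_one (α : ℝ) {E : Set ℝ} (hE : MeasurableSet E) (x : ℝ) :
    rieszPotential α (E.indicator 1) x = ∫⁻ s in E, ‖s - x‖ₑ ^ (α - 1) := by
  rw [rieszPotential, ← lintegral_indicator hE]
  refine lintegral_congr fun s ↦ ?_
  by_cases hs : s ∈ E <;> simp [hs]

lemma lintegral_Icc_enorm_rpow {α δ : ℝ} (hα : 0 < α) (hδ : 0 ≤ δ) :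
    ∫⁻ s in Set.Icc 0 δ, ‖s‖ₑ ^ (α - 1) = ENNReal.ofReal (δ ^ α / α) := by
  have hint : IntegrableOn (fun s : ℝ ↦ s ^ (α - 1)) (Set.Ioc 0 δ) :=
    (intervalIntegrable_iff_integrableOn_Ioc_of_le hδ).1
      (intervalIntegral.intervalIntegrable_rpow' (by linarith))
  calc ∫⁻ s in Set.Icc 0 δ, ‖s‖ₑ ^ (α - 1)
    _ = ∫⁻ s in Set.Ioc 0 δ, ‖s‖ₑ ^ (α - 1) := setLIntegral_congr Ioc_ae_eq_Icc.symm
    _ = ∫⁻ s in Set.Ioc 0 δ, ENNReal.ofReal (s ^ (α - 1)) :=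
        setLIntegral_congr_fun measurableSet_Ioc fun s hs ↦ by
          rw [Real.enorm_of_nonneg hs.1.le, ENNReal.ofReal_rpow_of_pos hs.1]
    _ = ENNReal.ofReal (∫ s in (0 : ℝ)..δ, s ^ (α - 1)) := by
        rw [intervalIntegral.integral_of_le hδ, ofReal_integral_eq_lintegral_ofReal hint]
        exact (ae_restrict_mem measurableSet_Ioc).mono fun s hs ↦ Real.rpow_nonneg hs.1.le _
    _ = ENNReal.ofReal (δ ^ α / α) := by
        rw [integral_rpow (Or.inl (by linarith)), sub_add_cancel, Real.zero_rpow hα.ne', sub_zero]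

lemma lintegral_ball_enorm_sub_rpow_le {α δ : ℝ} (hα : 0 < α) (hδ : 0 ≤ δ) (x : ℝ) :
    ∫⁻ s in Metric.ball x δ, ‖s - x‖ₑ ^ (α - 1) ≤ 2 * ENNReal.ofReal (δ ^ α / α) := by
  have hsub : Metric.ball (0 : ℝ) δ ⊆ Set.Icc 0 δ ∪ Neg.neg ⁻¹' Set.Icc 0 δ := by
    intro s hs
    obtain ⟨hl, hr⟩ := abs_lt.1 (mem_ball_zero_iff.1 hs)
    rcases le_total 0 s with h | h
    · exact Or.inl ⟨h, hr.le⟩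
    · exact Or.inr ⟨by linarith, by linarith⟩
  have hneg : ∫⁻ s in Neg.neg ⁻¹' Set.Icc 0 δ, ‖s‖ₑ ^ (α - 1) =
      ∫⁻ s in Set.Icc 0 δ, ‖s‖ₑ ^ (α - 1) := by
    simpa using (Measure.measurePreserving_neg (volume : Measure ℝ)).setLIntegral_comp_preimage
      (s := Set.Icc 0 δ) measurableSet_Icc (f := fun s ↦ ‖s‖ₑ ^ (α - 1)) (by fun_prop)
  calc ∫⁻ s in Metric.ball x δ, ‖s - x‖ₑ ^ (α - 1)
    _ = ∫⁻ s in Metric.ball (0 : ℝ) δ, ‖s‖ₑ ^ (α - 1) := by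
        have hpre : (fun s ↦ s - x) ⁻¹' Metric.ball 0 δ = Metric.ball x δ := by
          ext s; simp [dist_eq_norm]
        rw [← hpre]
        exact (measurePreserving_sub_right volume x).setLIntegral_comp_preimage
          measurableSet_ball (f := fun s ↦ ‖s‖ₑ ^ (α - 1)) (by fun_prop)
    _ ≤ ∫⁻ s in Set.Icc 0 δ ∪ Neg.neg ⁻¹' Set.Icc 0 δ, ‖s‖ₑ ^ (α - 1) := lintegral_mono_set hsub
    _ ≤ (∫⁻ s in Set.Icc 0 δ, ‖s‖ₑ ^ (α - 1)) + ∫⁻ s in Neg.neg ⁻¹' Set.Icc 0 δ, ‖s‖ₑ ^ (α - 1) :=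
        lintegral_union_le _ _ _
    _ = 2 * ENNReal.ofReal (δ ^ α / α) := by
        rw [hneg, lintegral_Icc_enorm_rpow hα hδ, two_mul]

lemma rieszPotential_indicator_one_le {α : ℝ} (hα : 0 < α) (hα1 : α ≤ 1) {E : Set ℝ}
    (hE : MeasurableSet E) (x : ℝ) :
    rieszPotential α (E.indicator 1) x ≤ ENNReal.ofReal (2 / α + 1) * volume E ^ α := by
  rw [rieszPotential_indicator_one α hE]
  rcases eq_or_ne (volume E) 0 with hE0 | hE0
  · simp [Measure.restrict_eq_zero.2 hE0]
  rcases eq_or_ne (volume E) ∞ with hEtop | hEtop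
  · have : ENNReal.ofReal (2 / α + 1) ≠ 0 := (ENNReal.ofReal_pos.2 (by positivity)).ne'
    simp [hEtop, hα, ENNReal.mul_top this]
  -- At this radius the near and the far part of `E` both contribute at most the order `|E| ^ α`.
  set δ := (volume E).toReal
  have hδ0 : 0 < δ := ENNReal.toReal_pos hE0 hEtop
  have hEδ : volume E = ENNReal.ofReal δ := (ENNReal.ofReal_toReal hEtop).symm
  have hfar : ∀ s ∈ E \ Metric.ball x δ, ‖s - x‖ₑ ^ (α - 1) ≤ ENNReal.ofReal (δ ^ (α - 1)) := by
    intro s hs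
    have hs' : ENNReal.ofReal δ ≤ ‖s - x‖ₑ := by
      rw [← ofReal_norm, ← dist_eq_norm]
      exact ENNReal.ofReal_le_ofReal (not_lt.1 hs.2)
    rw [← ENNReal.ofReal_rpow_of_pos hδ0]
    simpa only [← ENNReal.rpow_neg, neg_sub] using
      ENNReal.inv_le_inv.2 (ENNReal.rpow_le_rpow hs' (sub_nonneg.2 hα1))
  calc ∫⁻ s in E, ‖s - x‖ₑ ^ (α - 1)
    _ ≤ ∫⁻ s in Metric.ball x δ ∪ E \ Metric.ball x δ, ‖s - x‖ₑ ^ (α - 1) :=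
        lintegral_mono_set (by simp)
    _ ≤ (∫⁻ s in Metric.ball x δ, ‖s - x‖ₑ ^ (α - 1)) +
          ∫⁻ s in E \ Metric.ball x δ, ‖s - x‖ₑ ^ (α - 1) := lintegral_union_le _ _ _
    _ ≤ 2 * ENNReal.ofReal (δ ^ α / α) + ENNReal.ofReal (δ ^ (α - 1)) * volume E := by
        gcongr
        · exact lintegral_ball_enorm_sub_rpow_le hα hδ0.le x
        · refine (setLIntegral_mono measurable_const hfar).trans ?_
          rw [setLIntegral_const]
          gcongr
          exact Set.sdiff_subset
    _ = ENNReal.ofReal (2 / α + 1) * volume E ^ α := by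
        rw [hEδ, ENNReal.ofReal_rpow_of_pos hδ0, ← ENNReal.ofReal_ofNat 2,
          ← ENNReal.ofReal_mul (by positivity), ← ENNReal.ofReal_mul (by positivity),
          ← ENNReal.ofReal_mul (by positivity), ← ENNReal.ofReal_add (by positivity)
          (by positivity), Real.rpow_sub_one hδ0.ne']
        congr 1
        field_simp

end RieszPotential

section WeightedHolder

lemma mul_eq_rpow_inv_mul_rpow_one_sub_inv {k : ℝ≥0∞} (hk0 : k ≠ 0) (hktop : k ≠ ∞) {p : ℝ}
    (hp : 1 ≤ p) (u v : ℝ≥0∞) :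
    u * v = (u ^ p * k ^ (1 - p) * v) ^ p⁻¹ * (k * v) ^ (1 - p⁻¹) := by
  have hp0 : 0 < p := by linarith
  have hq0 : 0 ≤ 1 - p⁻¹ := sub_nonneg.2 (inv_le_one_of_one_le₀ hp)
  have hkk : k ^ ((1 - p) * p⁻¹) * k ^ (1 - p⁻¹) = 1 := by
    rw [← ENNReal.rpow_add _ _ hk0 hktop, sub_mul, mul_inv_cancel₀ hp0.ne']
    simp
  have hvv : v ^ p⁻¹ * v ^ (1 - p⁻¹) = v := by
    rw [← ENNReal.rpow_add_of_nonneg _ _ (by positivity) hq0]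
    simp
  calc u * v
    _ = u * (k ^ ((1 - p) * p⁻¹) * k ^ (1 - p⁻¹)) * (v ^ p⁻¹ * v ^ (1 - p⁻¹)) := by
        rw [hkk, hvv, mul_one]
    _ = _ := by
        rw [ENNReal.mul_rpow_of_nonneg _ _ (by positivity),
          ENNReal.mul_rpow_of_nonneg _ _ (by positivity), ENNReal.mul_rpow_of_nonneg _ _ hq0,
          ENNReal.rpow_rpow_inv hp0.ne', ← ENNReal.rpow_mul]
        ring

variable {α : Type*} [MeasurableSpace α] {μ : Measure α}

lemma lintegral_mul_rpow_le_lintegral_weight {u v k : α → ℝ≥0∞} (hu : AEMeasurable u μ)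
    (hv : AEMeasurable v μ) (hk : AEMeasurable k μ) (hk0 : ∀ᵐ a ∂μ, k a ≠ 0)
    (hktop : ∀ᵐ a ∂μ, k a ≠ ∞) {p : ℝ} (hp : 1 ≤ p) :
    (∫⁻ a, u a * v a ∂μ) ^ p ≤
      (∫⁻ a, u a ^ p * k a ^ (1 - p) * v a ∂μ) * (∫⁻ a, k a * v a ∂μ) ^ (p - 1) := by
  have hp0 : 0 < p := by linarith
  have hq0 : 0 ≤ 1 - p⁻¹ := sub_nonneg.2 (inv_le_one_of_one_le₀ hp)
  calc (∫⁻ a, u a * v a ∂μ) ^ p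
    _ = (∫⁻ a, (u a ^ p * k a ^ (1 - p) * v a) ^ p⁻¹ * (k a * v a) ^ (1 - p⁻¹) ∂μ) ^ p := by
        congr 1
        refine lintegral_congr_ae ?_
        filter_upwards [hk0, hktop] with a h0 htop
        exact mul_eq_rpow_inv_mul_rpow_one_sub_inv h0 htop hp _ _
    _ ≤ ((∫⁻ a, u a ^ p * k a ^ (1 - p) * v a ∂μ) ^ p⁻¹ *
          (∫⁻ a, k a * v a ∂μ) ^ (1 - p⁻¹)) ^ p := by
        gcongr
        exact ENNReal.lintegral_mul_norm_pow_le (by fun_prop) (by fun_prop) (by positivity) hq0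
          (by ring)
    _ = _ := by
        rw [ENNReal.mul_rpow_of_nonneg _ _ hp0.le, ENNReal.rpow_inv_rpow hp0.ne',
          ← ENNReal.rpow_mul, sub_mul, inv_mul_cancel₀ hp0.ne', one_mul]

lemma lintegral_lintegral_comp_sub_mul_comp_sub [SFinite μ] {h f : ℝ → ℝ≥0∞} {a b : α → ℝ}
    {k : α → ℝ≥0∞} (hh : Measurable h) (hf : Measurable f) (ha : Measurable a)
    (hb : Measurable b) (hk : Measurable k) :
    ∫⁻ x, ∫⁻ t, h (x - a t) * k t * f (x - b t) ∂μ =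
      ∫⁻ y, (∫⁻ t, k t * h (y + (b t - a t)) ∂μ) * f y := by
  calc ∫⁻ x, ∫⁻ t, h (x - a t) * k t * f (x - b t) ∂μ
    _ = ∫⁻ t, (∫⁻ x, h (x - a t) * k t * f (x - b t)) ∂μ := lintegral_lintegral_swap (by fun_prop)
    _ = ∫⁻ t, (∫⁻ y, k t * h (y + (b t - a t)) * f y) ∂μ := by
        refine lintegral_congr fun t ↦ ?_
        rw [← lintegral_sub_right_eq_self (fun y ↦ k t * h (y + (b t - a t)) * f y) (b t)]
        refine lintegral_congr fun x ↦ ?_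
        rw [sub_add_sub_cancel, mul_comm (k t)]
    _ = ∫⁻ y, (∫⁻ t, k t * h (y + (b t - a t)) * f y ∂μ) := lintegral_lintegral_swap (by fun_prop)
    _ = ∫⁻ y, (∫⁻ t, k t * h (y + (b t - a t)) ∂μ) * f y :=
        lintegral_congr fun y ↦ lintegral_mul_const _ (by fun_prop)

end WeightedHolder

section CircleChangeOfVariables

lemma ae_cos_add_ne_zero (c : ℝ) : ∀ᵐ t : ℝ, Real.cos (t + c) ≠ 0 := by
  have hzeros : {t : ℝ | Real.cos (t + c) = 0}.Countable := by
    refine (Set.countable_range fun k : ℤ ↦ (2 * k + 1) * Real.pi / 2 - c).mono fun t ht ↦ ?_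
    obtain ⟨k, hk⟩ := Real.cos_eq_zero_iff.1 ht
    exact ⟨k, by simp [← hk]⟩
  simpa [ae_iff] using hzeros.measure_zero volume

lemma setLIntegral_Ioc_eq_of_periodic {F : ℝ → ℝ≥0∞} {T : ℝ} (hF : F.Periodic T) (hT : 0 < T)
    (a b : ℝ) : ∫⁻ t in Set.Ioc a (a + T), F t = ∫⁻ t in Set.Ioc b (b + T), F t :=
  (isAddFundamentalDomain_Ioc hT a).setLIntegral_eq (isAddFundamentalDomain_Ioc hT b) F
    hF.map_vadd_zmultiples

lemma setLIntegral_arc_enorm_cos_mul_comp_sin_le (r c : ℝ) (k : ℤ) (g : ℝ → ℝ≥0∞) :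
    ∫⁻ t in Set.Icc (k * Real.pi - Real.pi / 2 - c) (k * Real.pi + Real.pi / 2 - c),
      ‖r * Real.cos (t + c)‖ₑ * g (r * Real.sin (t + c)) ≤ ∫⁻ s, g s := by
  rcases eq_or_ne r 0 with rfl | hr
  · simp
  have hderiv (t : ℝ) :
      HasDerivAt (fun t ↦ r * Real.sin (t + c)) (r * Real.cos (t + c)) t := by
    simpa using ((Real.hasDerivAt_sin (t + c)).comp_add_const t c).const_mul r
  have hinj : Set.InjOn (fun t ↦ r * Real.sin (t + c))
      (Set.Icc (k * Real.pi - Real.pi / 2 - c) (k * Real.pi + Real.pi / 2 - c)) := by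
    intro x hx y hy hxy
    have hsin : Real.sin (x + c - k * Real.pi) = Real.sin (y + c - k * Real.pi) := by
      rw [Real.sin_sub_int_mul_pi, Real.sin_sub_int_mul_pi, mul_left_cancel₀ hr hxy]
    have := Real.injOn_sin (x₁ := x + c - k * Real.pi) (x₂ := y + c - k * Real.pi)
      ⟨by linarith [hx.1], by linarith [hx.2]⟩ ⟨by linarith [hy.1], by linarith [hy.2]⟩ hsin
    linarith
  simp only [Real.enorm_eq_ofReal_abs]
  rw [← lintegral_image_eq_lintegral_abs_deriv_mul measurableSet_Icc
    (fun t _ ↦ (hderiv t).hasDerivWithinAt) hinj]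
  exact setLIntegral_le_lintegral _ _

lemma lintegral_enorm_cos_mul_comp_sin_le (r c : ℝ) (g : ℝ → ℝ≥0∞) :
    ∫⁻ t in Set.Ioc 0 (2 * Real.pi), ‖r * Real.cos (t + c)‖ₑ * g (r * Real.sin (t + c)) ≤
      2 * ∫⁻ s, g s := by
  set F : ℝ → ℝ≥0∞ := fun t ↦ ‖r * Real.cos (t + c)‖ₑ * g (r * Real.sin (t + c)) with hF
  set arc : ℤ → Set ℝ := fun k ↦
    Set.Icc (k * Real.pi - Real.pi / 2 - c) (k * Real.pi + Real.pi / 2 - c) with harc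
  have hperiodic : F.Periodic (2 * Real.pi) := fun t ↦ by
    simp only [hF, add_right_comm t, Real.cos_add_two_pi, Real.sin_add_two_pi]
  have hcover : Set.Ioc (-(Real.pi / 2) - c) (-(Real.pi / 2) - c + 2 * Real.pi) ⊆
      arc 0 ∪ arc 1 := by
    intro t ht
    simp only [harc, Set.mem_union, Set.mem_Icc, Int.cast_zero, Int.cast_one]
    rcases le_total t (Real.pi / 2 - c) with h | h
    · exact Or.inl ⟨by linarith [ht.1], by linarith⟩
    · exact Or.inr ⟨by linarith, by linarith [ht.2]⟩
  calc ∫⁻ t in Set.Ioc 0 (2 * Real.pi), F t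
    _ = ∫⁻ t in Set.Ioc (-(Real.pi / 2) - c) (-(Real.pi / 2) - c + 2 * Real.pi), F t := by
        simpa using setLIntegral_Ioc_eq_of_periodic hperiodic Real.two_pi_pos 0 _
    _ ≤ ∫⁻ t in arc 0 ∪ arc 1, F t := lintegral_mono_set hcover
    _ ≤ (∫⁻ t in arc 0, F t) + ∫⁻ t in arc 1, F t := lintegral_union_le _ _ _
    _ ≤ (∫⁻ s, g s) + ∫⁻ s, g s :=
        add_le_add (setLIntegral_arc_enorm_cos_mul_comp_sin_le r c 0 g)
          (setLIntegral_arc_enorm_cos_mul_comp_sin_le r c 1 g)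
    _ = 2 * ∫⁻ s, g s := (two_mul _).symm

lemma sqrt_two_mul_sin_sub_pi_div_four (t : ℝ) :
    √2 * Real.sin (t + -(Real.pi / 4)) = Real.sin t - Real.cos t := by
  rw [← sub_eq_add_neg, Real.sin_sub, Real.cos_pi_div_four, Real.sin_pi_div_four]
  linear_combination (Real.sin t - Real.cos t) / 2 * Real.mul_self_sqrt (zero_le_two (α := ℝ))

lemma sqrt_two_mul_cos_sub_pi_div_four (t : ℝ) :
    √2 * Real.cos (t + -(Real.pi / 4)) = Real.sin t + Real.cos t := by
  rw [← sub_eq_add_neg, Real.cos_sub, Real.cos_pi_div_four, Real.sin_pi_div_four]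
  linear_combination (Real.sin t + Real.cos t) / 2 * Real.mul_self_sqrt (zero_le_two (α := ℝ))

lemma ae_sin_add_cos_ne_zero : ∀ᵐ t : ℝ, Real.sin t + Real.cos t ≠ 0 := by
  filter_upwards [ae_cos_add_ne_zero (-(Real.pi / 4))] with t ht
  rw [← sqrt_two_mul_cos_sub_pi_div_four]
  exact mul_ne_zero (by positivity) ht

lemma lintegral_enorm_cos_mul_comp_const_sub_sin_le (f : ℝ → ℝ≥0∞) (x : ℝ) :
    ∫⁻ t in Set.Ioc 0 (2 * Real.pi), ‖Real.cos t‖ₑ * f (x - Real.sin t) ≤ 2 * ∫⁻ s, f s := by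
  simpa [lintegral_sub_left_eq_self] using
    lintegral_enorm_cos_mul_comp_sin_le 1 0 fun s ↦ f (x - s)

lemma lintegral_enorm_sin_add_cos_mul_le (g : ℝ → ℝ≥0∞) :
    ∫⁻ t in Set.Ioc 0 (2 * Real.pi),
      ‖Real.sin t + Real.cos t‖ₑ * g (Real.sin t - Real.cos t) ≤ 2 * ∫⁻ s, g s := by
  simpa only [sqrt_two_mul_sin_sub_pi_div_four, sqrt_two_mul_cos_sub_pi_div_four] using
    lintegral_enorm_cos_mul_comp_sin_le √2 (-(Real.pi / 4)) g

end CircleChangeOfVariables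

section SingularWeight

lemma enorm_two : ‖(2 : ℝ)‖ₑ = 2 := mod_cast Real.enorm_natCast 2

lemma enorm_sub_mul_inv_enorm_le {F : Type*} [SeminormedAddGroup F] (x y : F) :
    ‖x - y‖ₑ * (‖x‖ₑ⁻¹ * ‖y‖ₑ⁻¹) ≤ ‖x‖ₑ⁻¹ + ‖y‖ₑ⁻¹ := by
  rcases eq_or_ne ‖x‖ₑ 0 with hx | hx
  · simp [hx]
  rcases eq_or_ne ‖y‖ₑ 0 with hy | hy
  · simp [hy]
  calc ‖x - y‖ₑ * (‖x‖ₑ⁻¹ * ‖y‖ₑ⁻¹)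
    _ ≤ (‖x‖ₑ + ‖y‖ₑ) * (‖x‖ₑ⁻¹ * ‖y‖ₑ⁻¹) := by gcongr; exact enorm_sub_le
    _ = ‖x‖ₑ * ‖x‖ₑ⁻¹ * ‖y‖ₑ⁻¹ + ‖y‖ₑ * ‖y‖ₑ⁻¹ * ‖x‖ₑ⁻¹ := by ring
    _ = ‖x‖ₑ⁻¹ + ‖y‖ₑ⁻¹ := by
        rw [ENNReal.mul_inv_cancel hx enorm_ne_top, ENNReal.mul_inv_cancel hy enorm_ne_top,
          one_mul, one_mul, add_comm]

lemma enorm_two_mul_mul_inv_enorm_sq_sub_sq_le (u a : ℝ) :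
    ‖2 * a‖ₑ * ‖u ^ 2 - a ^ 2‖ₑ⁻¹ ≤ ‖u - a‖ₑ⁻¹ + ‖u - -a‖ₑ⁻¹ := by
  have hdiff : ‖2 * a‖ₑ = ‖(u - a) - (u - -a)‖ₑ := by
    rw [← enorm_neg]
    congr 1
    ring
  have hprod : ‖u ^ 2 - a ^ 2‖ₑ⁻¹ = ‖u - a‖ₑ⁻¹ * ‖u - -a‖ₑ⁻¹ := by
    rw [← ENNReal.mul_inv (Or.inr enorm_ne_top) (Or.inl enorm_ne_top), ← enorm_mul]
    ring_nf
  rw [hdiff, hprod]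
  exact enorm_sub_mul_inv_enorm_le _ _

lemma rpow_sum_le_sum_rpow {ι : Type*} (s : Finset ι) (f : ι → ℝ≥0∞) {p : ℝ} (hp : 0 < p)
    (hp1 : p ≤ 1) : (∑ i ∈ s, f i) ^ p ≤ ∑ i ∈ s, f i ^ p :=
  Finset.le_sum_of_subadditive (· ^ p) (ENNReal.zero_rpow_of_pos hp).le
    (fun a b ↦ ENNReal.rpow_add_le_add_rpow a b hp.le hp1) s f

/-- The values `±1` of `sin t - cos t` at the zeros of `cos`, and its critical values `±√2`. They
are the singularities of the image of `|cos t| ^ (-1/2) dt` under `t ↦ sin t - cos t`. -/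
noncomputable def singularValue : Fin 4 → ℝ := ![1, -1, √2, -√2]

lemma two_mul_inv_enorm_mul_inv_enorm_le_sum (u : ℝ) :
    2 * (‖u ^ 2 - 1‖ₑ⁻¹ * ‖u ^ 2 - 2‖ₑ⁻¹) ≤ ∑ i, ‖u - singularValue i‖ₑ⁻¹ := by
  have hsplit : ‖u ^ 2 - 1‖ₑ⁻¹ * ‖u ^ 2 - 2‖ₑ⁻¹ ≤ ‖u ^ 2 - 1‖ₑ⁻¹ + ‖u ^ 2 - 2‖ₑ⁻¹ := by
    have hgap : (u ^ 2 - 1) - (u ^ 2 - 2) = 1 := by ring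
    have hle := enorm_sub_mul_inv_enorm_le (u ^ 2 - 1) (u ^ 2 - 2)
    rwa [hgap, enorm_one, one_mul] at hle
  have hone : 2 * ‖u ^ 2 - 1‖ₑ⁻¹ ≤ ‖u - 1‖ₑ⁻¹ + ‖u - -1‖ₑ⁻¹ := by
    simpa [enorm_two] using enorm_two_mul_mul_inv_enorm_sq_sub_sq_le u 1
  have htwo : 2 * ‖u ^ 2 - 2‖ₑ⁻¹ ≤ ‖u - √2‖ₑ⁻¹ + ‖u - -√2‖ₑ⁻¹ := by
    have hle : (2 : ℝ≥0∞) ≤ ‖2 * √2‖ₑ := by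
      rw [Real.enorm_of_nonneg (by positivity), ← ENNReal.ofReal_ofNat 2]
      gcongr
      linarith [Real.one_le_sqrt.2 one_le_two]
    refine (mul_le_mul_left hle _).trans ?_
    simpa using enorm_two_mul_mul_inv_enorm_sq_sub_sq_le u √2
  calc 2 * (‖u ^ 2 - 1‖ₑ⁻¹ * ‖u ^ 2 - 2‖ₑ⁻¹)
    _ ≤ 2 * (‖u ^ 2 - 1‖ₑ⁻¹ + ‖u ^ 2 - 2‖ₑ⁻¹) := by gcongr
    _ = 2 * ‖u ^ 2 - 1‖ₑ⁻¹ + 2 * ‖u ^ 2 - 2‖ₑ⁻¹ := mul_add _ _ _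
    _ ≤ (‖u - 1‖ₑ⁻¹ + ‖u - -1‖ₑ⁻¹) + (‖u - √2‖ₑ⁻¹ + ‖u - -√2‖ₑ⁻¹) := add_le_add hone htwo
    _ = ∑ i, ‖u - singularValue i‖ₑ⁻¹ := by
        simp [Fin.sum_univ_four, singularValue, add_assoc]

lemma inv_enorm_cos_le {t : ℝ} (ht : Real.sin t + Real.cos t ≠ 0) :
    ‖Real.cos t‖ₑ⁻¹ ≤ ‖Real.sin t + Real.cos t‖ₑ ^ 2 *
      ∑ i, ‖Real.sin t - Real.cos t - singularValue i‖ₑ⁻¹ := by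
  set u := Real.sin t - Real.cos t
  set J := ‖Real.sin t + Real.cos t‖ₑ
  have hJ0 : J ^ 2 ≠ 0 := pow_ne_zero 2 (enorm_ne_zero.2 ht)
  have hJtop : J ^ 2 ≠ ∞ := ENNReal.pow_ne_top enorm_ne_top
  have hone : ‖u ^ 2 - 1‖ₑ ≤ 2 * ‖Real.cos t‖ₑ := by
    have hsin : ‖Real.sin t‖ₑ ≤ 1 := by
      simpa [Real.enorm_eq_ofReal_abs] using Real.abs_sin_le_one t
    have hprod : u ^ 2 - 1 = -2 * (Real.sin t * Real.cos t) := by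
      linear_combination Real.sin_sq_add_cos_sq t
    rw [hprod, enorm_mul, enorm_mul, enorm_neg]
    simpa [enorm_two] using mul_le_mul_right (mul_le_mul_left hsin ‖Real.cos t‖ₑ) 2
  have htwo : ‖u ^ 2 - 2‖ₑ = J ^ 2 := by
    have hsq : u ^ 2 - 2 = -(Real.sin t + Real.cos t) ^ 2 := by
      linear_combination 2 * Real.sin_sq_add_cos_sq t
    rw [hsq, enorm_neg, enorm_pow]
  calc ‖Real.cos t‖ₑ⁻¹
    _ = 2 * (2 * ‖Real.cos t‖ₑ)⁻¹ := by
        rw [ENNReal.mul_inv (Or.inl two_ne_zero) (Or.inl ENNReal.ofNat_ne_top), ← mul_assoc,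
          ENNReal.mul_inv_cancel two_ne_zero ENNReal.ofNat_ne_top, one_mul]
    _ ≤ 2 * ‖u ^ 2 - 1‖ₑ⁻¹ := by gcongr
    _ = J ^ 2 * (2 * (‖u ^ 2 - 1‖ₑ⁻¹ * ‖u ^ 2 - 2‖ₑ⁻¹)) := by
        rw [htwo]
        calc 2 * ‖u ^ 2 - 1‖ₑ⁻¹
          _ = J ^ 2 * (J ^ 2)⁻¹ * (2 * ‖u ^ 2 - 1‖ₑ⁻¹) := by
              rw [ENNReal.mul_inv_cancel hJ0 hJtop, one_mul]
          _ = _ := by ring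
    _ ≤ J ^ 2 * ∑ i, ‖u - singularValue i‖ₑ⁻¹ := by
        gcongr
        exact two_mul_inv_enorm_mul_inv_enorm_le_sum u

lemma enorm_cos_rpow_neg_half_le {t : ℝ} (ht : Real.sin t + Real.cos t ≠ 0) :
    ‖Real.cos t‖ₑ ^ (-(1 / 2) : ℝ) ≤ ‖Real.sin t + Real.cos t‖ₑ *
      ∑ i, ‖Real.sin t - Real.cos t - singularValue i‖ₑ ^ (-(1 / 2) : ℝ) := by
  have hhalf : (0 : ℝ) ≤ 1 / 2 := by norm_num
  simp only [ENNReal.rpow_neg, ← ENNReal.inv_rpow]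
  calc ‖Real.cos t‖ₑ⁻¹ ^ (1 / 2 : ℝ)
    _ ≤ (‖Real.sin t + Real.cos t‖ₑ ^ 2 *
          ∑ i, ‖Real.sin t - Real.cos t - singularValue i‖ₑ⁻¹) ^ (1 / 2 : ℝ) := by
        gcongr
        exact inv_enorm_cos_le ht
    _ = ‖Real.sin t + Real.cos t‖ₑ *
          (∑ i, ‖Real.sin t - Real.cos t - singularValue i‖ₑ⁻¹) ^ (1 / 2 : ℝ) := by
        rw [ENNReal.mul_rpow_of_nonneg _ _ hhalf, ← ENNReal.rpow_natCast, ← ENNReal.rpow_mul]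
        norm_num
    _ ≤ _ := by
        gcongr
        exact rpow_sum_le_sum_rpow _ _ (by norm_num) (by norm_num)

lemma lintegral_enorm_cos_rpow_neg_half_mul_le {g : ℝ → ℝ≥0∞} (hg : Measurable g) :
    ∫⁻ t in Set.Ioc 0 (2 * Real.pi),
      ‖Real.cos t‖ₑ ^ (-(1 / 2) : ℝ) * g (Real.sin t - Real.cos t) ≤
        8 * ⨆ x, rieszPotential (1 / 2) g x := by
  set G : ℝ → ℝ≥0∞ := fun u ↦ ∑ i, g u * ‖u - singularValue i‖ₑ ^ (1 / 2 - 1 : ℝ) with hG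
  calc ∫⁻ t in Set.Ioc 0 (2 * Real.pi),
        ‖Real.cos t‖ₑ ^ (-(1 / 2) : ℝ) * g (Real.sin t - Real.cos t)
    _ ≤ ∫⁻ t in Set.Ioc 0 (2 * Real.pi),
          ‖Real.sin t + Real.cos t‖ₑ * G (Real.sin t - Real.cos t) := by
        refine lintegral_mono_ae (ae_restrict_of_ae ?_)
        filter_upwards [ae_sin_add_cos_ne_zero] with t ht
        refine (mul_le_mul_left (enorm_cos_rpow_neg_half_le ht) _).trans_eq ?_
        simp only [hG, ← Finset.mul_sum]
        rw [show (1 / 2 - 1 : ℝ) = -(1 / 2) by norm_num]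
        ring
    _ ≤ 2 * ∫⁻ u, G u := lintegral_enorm_sin_add_cos_mul_le G
    _ = 2 * ∑ i, rieszPotential (1 / 2) g (singularValue i) := by
        rw [lintegral_finsetSum _ fun i _ ↦ by fun_prop]
        rfl
    _ ≤ 2 * ∑ _i : Fin 4, ⨆ x, rieszPotential (1 / 2) g x := by
        gcongr
        exact le_iSup (rieszPotential (1 / 2) g) _
    _ = 8 * ⨆ x, rieszPotential (1 / 2) g x := by
        rw [Finset.sum_const, Finset.card_univ, Fintype.card_fin, nsmul_eq_mul, ← mul_assoc]
        norm_num

end SingularWeight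

section CircleBilinear

/-- The operator `T2` on `ℝ≥0∞`-valued functions, without the normalisation `1 / (2π)`. -/
noncomputable def circleBilin (f₁ f₂ : ℝ → ℝ≥0∞) (x : ℝ) : ℝ≥0∞ :=
  ∫⁻ t in Set.Ioc 0 (2 * Real.pi), f₁ (x - Real.cos t) * f₂ (x - Real.sin t)

lemma T2_le_circleBilin (f₁ f₂ : ℝ → ℝ) (x : ℝ) :
    T2 f₁ f₂ x ≤
      circleBilin (fun y ↦ ENNReal.ofReal (f₁ y)) (fun y ↦ ENNReal.ofReal (f₂ y)) x := by
  refine mul_le_of_le_one_left' ?_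
  rw [ENNReal.inv_le_one, ENNReal.one_le_ofReal]
  linarith [Real.pi_gt_three]

variable {f₁ f₂ : ℝ → ℝ≥0∞}

lemma circleBilin_rpow_le (hf₁ : Measurable f₁) (hf₂ : Measurable f₂) (x : ℝ) :
    circleBilin f₁ f₂ x ^ (3 / 2 : ℝ) ≤
      (∫⁻ t in Set.Ioc 0 (2 * Real.pi), f₁ (x - Real.cos t) ^ (3 / 2 : ℝ) *
        ‖Real.cos t‖ₑ ^ (-(1 / 2) : ℝ) * f₂ (x - Real.sin t)) *
        (2 * ∫⁻ y, f₂ y) ^ (1 / 2 : ℝ) := by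
  have hcos : ∀ᵐ t : ℝ, ‖Real.cos t‖ₑ ≠ 0 := by simpa using ae_cos_add_ne_zero 0
  have hholder := lintegral_mul_rpow_le_lintegral_weight
    (μ := volume.restrict (Set.Ioc 0 (2 * Real.pi)))
    (u := fun t ↦ f₁ (x - Real.cos t)) (v := fun t ↦ f₂ (x - Real.sin t))
    (k := fun t ↦ ‖Real.cos t‖ₑ) (by fun_prop) (by fun_prop) (by fun_prop)
    (ae_restrict_of_ae hcos) (.of_forall fun _ ↦ enorm_ne_top) (p := 3 / 2) (by norm_num)
  rw [show (1 - 3 / 2 : ℝ) = -(1 / 2) by norm_num, show (3 / 2 - 1 : ℝ) = 1 / 2 by norm_num]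
    at hholder
  refine hholder.trans ?_
  gcongr
  exact lintegral_enorm_cos_mul_comp_const_sub_sin_le f₂ x

lemma lintegral_weighted_circleBilin_le {h : ℝ → ℝ≥0∞} (hh : Measurable h)
    (hf₂ : Measurable f₂) :
    ∫⁻ x, ∫⁻ t in Set.Ioc 0 (2 * Real.pi),
      h (x - Real.cos t) * ‖Real.cos t‖ₑ ^ (-(1 / 2) : ℝ) * f₂ (x - Real.sin t) ≤
        8 * (⨆ x, rieszPotential (1 / 2) h x) * ∫⁻ y, f₂ y := by
  rw [lintegral_lintegral_comp_sub_mul_comp_sub hh hf₂ (by fun_prop) (by fun_prop)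
    (by fun_prop), ← lintegral_const_mul _ hf₂]
  have htranslate (y : ℝ) : ⨆ x, rieszPotential (1 / 2) (fun s ↦ h (y + s)) x ≤
      ⨆ x, rieszPotential (1 / 2) h x := iSup_le fun x ↦ by
    rw [rieszPotential_comp_const_add]
    exact le_iSup (rieszPotential (1 / 2) h) (y + x)
  gcongr with y
  exact (lintegral_enorm_cos_rpow_neg_half_mul_le (by fun_prop)).trans
    (mul_le_mul_right (htranslate y) 8)

lemma lintegral_circleBilin_rpow_le (hf₁ : Measurable f₁) (hf₂ : Measurable f₂) :
    ∫⁻ x, circleBilin f₁ f₂ x ^ (3 / 2 : ℝ) ≤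
      16 * (⨆ x, rieszPotential (1 / 2) (fun y ↦ f₁ y ^ (3 / 2 : ℝ)) x) *
        (∫⁻ y, f₂ y) ^ (3 / 2 : ℝ) := by
  set N := ∫⁻ y, f₂ y
  set S := ⨆ x, rieszPotential (1 / 2) (fun y ↦ f₁ y ^ (3 / 2 : ℝ)) x
  calc ∫⁻ x, circleBilin f₁ f₂ x ^ (3 / 2 : ℝ)
    _ ≤ ∫⁻ x, (∫⁻ t in Set.Ioc 0 (2 * Real.pi), f₁ (x - Real.cos t) ^ (3 / 2 : ℝ) *
          ‖Real.cos t‖ₑ ^ (-(1 / 2) : ℝ) * f₂ (x - Real.sin t)) * (2 * N) ^ (1 / 2 : ℝ) :=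
        lintegral_mono (circleBilin_rpow_le hf₁ hf₂)
    _ = (∫⁻ x, ∫⁻ t in Set.Ioc 0 (2 * Real.pi), f₁ (x - Real.cos t) ^ (3 / 2 : ℝ) *
          ‖Real.cos t‖ₑ ^ (-(1 / 2) : ℝ) * f₂ (x - Real.sin t)) * (2 * N) ^ (1 / 2 : ℝ) :=
        lintegral_mul_const _ (Measurable.lintegral_prod_right (by fun_prop))
    _ ≤ 8 * S * N * (2 * N) ^ (1 / 2 : ℝ) := by
        gcongr
        exact lintegral_weighted_circleBilin_le (h := fun y ↦ f₁ y ^ (3 / 2 : ℝ))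
          (by fun_prop) hf₂
    _ ≤ 8 * S * N * (2 * N ^ (1 / 2 : ℝ)) := by
        rw [ENNReal.mul_rpow_of_nonneg _ _ (by norm_num)]
        gcongr
        simpa using ENNReal.rpow_le_rpow_of_exponent_le (one_le_two (α := ℝ≥0∞))
          (by norm_num : (1 / 2 : ℝ) ≤ 1)
    _ = 16 * S * (N ^ (1 : ℝ) * N ^ (1 / 2 : ℝ)) := by rw [ENNReal.rpow_one]; ring
    _ = 16 * S * N ^ (3 / 2 : ℝ) := by
        rw [← ENNReal.rpow_add_of_nonneg _ _ (by norm_num) (by norm_num)]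
        norm_num

lemma lpNorm_T2_le_rieszPotential {f₁ f₂ : ℝ → ℝ} (hf₁ : Measurable f₁) (hf₂ : Measurable f₂) :
    _root_.lpNorm (3 / 2) (T2 f₁ f₂) ≤
      (16 * ⨆ x, rieszPotential (1 / 2) (fun y ↦ ENNReal.ofReal (f₁ y) ^ (3 / 2 : ℝ)) x) ^
        (2 / 3 : ℝ) * _root_.lpNorm 1 fun x ↦ ENNReal.ofReal (f₂ x) := by
  have htop : (3 / 2 : ℝ≥0∞) ≠ ∞ := ENNReal.div_ne_top ENNReal.ofNat_ne_top two_ne_zero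
  have hexp : (3 / 2 : ℝ≥0∞).toReal = 3 / 2 := by simp
  simp only [_root_.lpNorm, if_neg htop, if_neg ENNReal.one_ne_top, hexp, ENNReal.toReal_one,
    ENNReal.rpow_one, div_one, one_div_div]
  set N := ∫⁻ x, ENNReal.ofReal (f₂ x)
  calc (∫⁻ x, T2 f₁ f₂ x ^ (3 / 2 : ℝ)) ^ (2 / 3 : ℝ)
    _ ≤ (∫⁻ x, circleBilin (fun y ↦ ENNReal.ofReal (f₁ y)) (fun y ↦ ENNReal.ofReal (f₂ y)) x ^
          (3 / 2 : ℝ)) ^ (2 / 3 : ℝ) := by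
        gcongr with x
        exact T2_le_circleBilin f₁ f₂ x
    _ ≤ (16 * (⨆ x, rieszPotential (1 / 2) (fun y ↦ ENNReal.ofReal (f₁ y) ^ (3 / 2 : ℝ)) x) *
          N ^ (3 / 2 : ℝ)) ^ (2 / 3 : ℝ) := by
        gcongr
        exact lintegral_circleBilin_rpow_le (by fun_prop) (by fun_prop)
    _ = _ := by
        rw [ENNReal.mul_rpow_of_nonneg _ _ (by norm_num), ← ENNReal.rpow_mul]
        norm_num

end CircleBilinear

theorem restricted_type_at_G :
    ∃ C : ℝ, 0 < C ∧ ∀ E : Set ℝ, MeasurableSet E → volume E < ∞ →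
      ∀ f₂ : ℝ → ℝ, Measurable f₂ → (∀ x, 0 ≤ f₂ x) →
      lpNorm (3 / 2) (T2 (E.indicator fun _ => (1 : ℝ)) f₂) ≤ ENNReal.ofReal C *
        volume E ^ ((1 : ℝ) / 3) *
        lpNorm 1 (fun x => ENNReal.ofReal (f₂ x)) := by
  refine ⟨80 ^ (2 / 3 : ℝ), by positivity, fun E hE _ f₂ hf₂ _ ↦ ?_⟩
  have hindicator : (fun y ↦ ENNReal.ofReal (E.indicator (fun _ ↦ (1 : ℝ)) y) ^ (3 / 2 : ℝ)) =
      E.indicator 1 := by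
    ext y
    by_cases hy : y ∈ E <;> simp [hy]
  have hpotential : ⨆ x, rieszPotential (1 / 2) (E.indicator 1) x ≤ 5 * volume E ^ (1 / 2 : ℝ) :=
    iSup_le fun x ↦ by
      have hle := rieszPotential_indicator_one_le (α := 1 / 2) (by norm_num) (by norm_num) hE x
      rwa [show (2 / (1 / 2) + 1 : ℝ) = 5 by norm_num, ENNReal.ofReal_ofNat] at hle
  refine (lpNorm_T2_le_rieszPotential (measurable_const.indicator hE) hf₂).trans ?_
  rw [hindicator]
  gcongr
  calc (16 * ⨆ x, rieszPotential (1 / 2) (E.indicator 1) x) ^ (2 / 3 : ℝ)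
    _ ≤ (16 * (5 * volume E ^ (1 / 2 : ℝ))) ^ (2 / 3 : ℝ) := by gcongr
    _ = (80 * volume E ^ (1 / 2 : ℝ)) ^ (2 / 3 : ℝ) := by rw [← mul_assoc]; norm_num
    _ = ENNReal.ofReal (80 ^ (2 / 3 : ℝ)) * volume E ^ (1 / 3 : ℝ) := by
        rw [ENNReal.mul_rpow_of_nonneg _ _ (by norm_num), ← ENNReal.rpow_mul,
          ← ENNReal.ofReal_rpow_of_pos (by norm_num)]
        norm_num
end

section
/- Let n ≥ 3 be an integer. There exists a finite constant C > 0, depending only on n, such that for all measurable sets I₁,…,I_{n−1} ⊆ ℝ of finite Lebesgue measure and every nonnegative measurable function fₙ on ℝ, ‖T(χ_{I₁},…,χ_{I_{n−1}}, fₙ)‖_∞ ≤ C (∏_{j=1}^{n−1} |I_j|^{(n−1)/n}) ‖fₙ‖_∞; that is, T is of restricted type at the point E = ((n−1)/n,…,(n−1)/n, 0; 0). -/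
open MeasureTheory ENNReal

/-- The normalized (total mass 1) surface measure on the unit sphere
`S^{n-1} ⊂ ℝ^n`, viewed as a measure on `ℝ^n` supported on the sphere. -/
noncomputable def normSphere (n : ℕ) : Measure (EuclideanSpace ℝ (Fin n)) :=
  (Measure.map Subtype.val
      ((volume : Measure (EuclideanSpace ℝ (Fin n))).toSphere) Set.univ)⁻¹ •
    Measure.map Subtype.val ((volume : Measure (EuclideanSpace ℝ (Fin n))).toSphere)

/-- The multilinear spherical average
`T(f₁,…,fₙ)(x) = ∫_{S^{n-1}} ∏_{j=1}^n f_j(x - σ_j) dσ(σ)`. -/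
noncomputable def sphAvg (n : ℕ) (f : Fin n → ℝ → ℝ) (x : ℝ) : ℝ≥0∞ :=
  ∫⁻ σ, ∏ j, ENNReal.ofReal (f j (x - σ j)) ∂(normSphere n)

/-!
By Archimedes' theorem, forgetting one coordinate maps the surface measure of `S^{n-1}` to the
measure with density `2 (1 - |y|²)^{-1/2}` on the unit ball of `ℝ^{n-1}`. Everything reduces to
bounding the integral `X` of this density over a box `J₁ × ⋯ × J_{n-1}` by a multiple of
`∏ |J_i|^{(n-1)/n}`.

Integrating first in the coordinate `y_j`, whose slices `∫ (c - t²)^{-1/2} dt` are uniformly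
bounded, gives `X ≲ ∏_{i ≠ j} |J_i|` for every `j`. Where `∑_{i ≠ p} y_i²` stays away from `1`, the
slices in `y_p` have only inverse square root singularities at their endpoints, so that part of the
integral is also `≲ |J_p|^{1/2} ∏_{i ≠ p} |J_i|`. The ball is covered by such regions, taking `p` to
be an index with `|y_p|` largest. On each of them the product of the square of the second bound with
the `n - 2` bounds for `j ≠ p` is `X^n ≲ ∏ |J_i|^{n-1}`.
-/

/-! ### Integrals on the line -/

theorem lintegral_comp_abs (g : ℝ → ℝ≥0∞) :
    ∫⁻ t, g |t| = 2 * ∫⁻ t in Set.Ioi 0, g t := by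
  have hpos : ∫⁻ t in Set.Ioi 0, g |t| = ∫⁻ t in Set.Ioi 0, g t :=
    setLIntegral_congr_fun measurableSet_Ioi fun t ht => by rw [abs_of_pos ht]
  have hneg : ∫⁻ t in Set.Iio 0, g |t| = ∫⁻ t in Set.Ioi 0, g |t| := by
    simpa using (Measure.measurePreserving_neg (volume : Measure ℝ)).setLIntegral_comp_preimage_emb
      (MeasurableEquiv.neg ℝ).measurableEmbedding (fun t => g |t|) (Set.Ioi 0)
  rw [← lintegral_add_compl _ (measurableSet_Ioi (a := (0 : ℝ))), Set.compl_Ioi,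
    setLIntegral_congr Iio_ae_eq_Iic.symm, hneg, hpos, two_mul]

theorem image_sqrt_add_sq_Ioi {s : ℝ} (hs : 0 ≤ s) :
    (fun t => √(s + t ^ 2)) '' Set.Ioi 0 = Set.Ioi √s := by
  ext r
  constructor
  · rintro ⟨t, ht, rfl⟩
    exact Real.sqrt_lt_sqrt hs (lt_add_of_pos_right s (pow_pos ht 2))
  · intro hr
    have hr0 : 0 < r := (Real.sqrt_nonneg s).trans_lt hr
    have hpos : 0 < r ^ 2 - s := sub_pos.2 ((Real.sqrt_lt' hr0).1 hr)
    refine ⟨√(r ^ 2 - s), Real.sqrt_pos.2 hpos, ?_⟩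
    dsimp only
    rw [Real.sq_sqrt hpos.le, add_sub_cancel, Real.sqrt_sq hr0.le]

theorem setLIntegral_Ioi_comp_sqrt_add_sq {s : ℝ} (hs : 0 ≤ s) (g : ℝ → ℝ≥0∞) :
    ∫⁻ t in Set.Ioi 0, g √(s + t ^ 2) =
      ∫⁻ r in Set.Ioi √s, ENNReal.ofReal (r * (√(r ^ 2 - s))⁻¹) * g r := by
  have hpos {t : ℝ} (ht : t ∈ Set.Ioi 0) : 0 < s + t ^ 2 :=
    add_pos_of_nonneg_of_pos hs (pow_pos ht 2)
  have hderiv : ∀ t ∈ Set.Ioi (0 : ℝ),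
      HasDerivWithinAt (fun t => √(s + t ^ 2)) (t / √(s + t ^ 2)) (Set.Ioi 0) t := by
    intro t ht
    convert! (((hasDerivAt_pow 2 t).const_add s).sqrt (hpos ht).ne').hasDerivWithinAt using 1
    push_cast
    ring
  have hinj : Set.InjOn (fun t => √(s + t ^ 2)) (Set.Ioi 0) := by
    intro a ha b hb hab
    have hsq : s + a ^ 2 = s + b ^ 2 := (Real.sqrt_inj (hpos ha).le (hpos hb).le).1 hab
    exact (pow_left_inj₀ (le_of_lt ha) (le_of_lt hb) two_ne_zero).1 (add_left_cancel hsq)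
  rw [← image_sqrt_add_sq_Ioi hs,
    lintegral_image_eq_lintegral_abs_deriv_mul measurableSet_Ioi hderiv hinj]
  refine setLIntegral_congr_fun measurableSet_Ioi fun t (ht : 0 < t) => ?_
  have hr : 0 < √(s + t ^ 2) := Real.sqrt_pos.2 (hpos ht)
  rw [← mul_assoc, ← ofReal_mul (abs_nonneg _), Real.sq_sqrt (hpos ht).le, add_sub_cancel_left,
    Real.sqrt_sq ht.le, abs_of_nonneg (by positivity), div_mul_eq_mul_div, ← div_eq_mul_inv,
    mul_div_cancel₀ _ ht.ne', div_self hr.ne', ofReal_one, one_mul]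

theorem lintegral_comp_sqrt_add_sq {s : ℝ} (hs : 0 ≤ s) (g : ℝ → ℝ≥0∞) :
    ∫⁻ t, g √(s + t ^ 2) =
      2 * ∫⁻ r in Set.Ioi 0, ENNReal.ofReal (r * (√(r ^ 2 - s))⁻¹) * g r := by
  have heven := lintegral_comp_abs fun t => g √(s + t ^ 2)
  simp only [sq_abs] at heven
  rw [heven, setLIntegral_Ioi_comp_sqrt_add_sq hs, ← lintegral_indicator measurableSet_Ioi,
    ← lintegral_indicator measurableSet_Ioi]
  congr 2 with r
  by_cases hr : r ∈ Set.Ioi √s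
  · have hr0 : r ∈ Set.Ioi 0 := (Real.sqrt_nonneg s).trans_lt hr
    rw [Set.indicator_of_mem hr, Set.indicator_of_mem hr0]
  · rw [Set.indicator_of_notMem hr]
    refine (Set.indicator_apply_eq_zero.2 fun hr0 : 0 < r => ?_).symm
    have hle : r ^ 2 - s ≤ 0 := sub_nonpos.2 ((Real.le_sqrt hr0.le hs).1 (not_lt.1 hr))
    simp [Real.sqrt_eq_zero'.2 hle]

theorem setLIntegral_Ioo_ofReal_pow (m : ℕ) :
    ∫⁻ r in Set.Ioo (0 : ℝ) 1, ENNReal.ofReal (r ^ m) = (m + 1 : ℝ≥0∞)⁻¹ := by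
  have hint : IntegrableOn (fun r : ℝ => r ^ m) (Set.Ioo 0 1) :=
    (continuous_pow m).integrableOn_Icc.mono_set Set.Ioo_subset_Icc_self
  rw [← ofReal_integral_eq_lintegral_ofReal hint
      (ae_restrict_of_forall_mem measurableSet_Ioo fun r hr => pow_nonneg hr.1.le m),
    ← integral_Ioc_eq_integral_Ioo, ← intervalIntegral.integral_of_le zero_le_one, integral_pow,
    one_pow, zero_pow m.succ_ne_zero, sub_zero, one_div, ofReal_inv_of_pos m.cast_add_one_pos]
  norm_cast

theorem setLIntegral_closedBall_rpow_neg {α : ℝ} (hα : α < 1) (s : ℝ) {ℓ : ℝ} (hℓ : 0 ≤ ℓ) :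
    ∫⁻ t in Metric.closedBall s ℓ, ENNReal.ofReal (|t - s| ^ (-α)) =
      ENNReal.ofReal (2 / (1 - α) * ℓ ^ (1 - α)) := by
  set g : ℝ → ℝ≥0∞ := (Set.Iic ℓ).indicator fun u => ENNReal.ofReal (u ^ (-α)) with hg
  have hball (t : ℝ) : (Metric.closedBall s ℓ).indicator
      (fun t => ENNReal.ofReal (|t - s| ^ (-α))) t = g |t - s| :=
    Set.indicator_comp_right (s := Set.Iic ℓ) (g := fun u => ENNReal.ofReal (u ^ (-α))) (dist · s)
  have hint : IntegrableOn (fun u : ℝ => u ^ (-α)) (Set.Ioc 0 ℓ) :=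
    (intervalIntegral.intervalIntegrable_rpow' (neg_lt_neg hα)).1
  have hval : ∫ u in Set.Ioc 0 ℓ, u ^ (-α) = ℓ ^ (1 - α) / (1 - α) := by
    rw [← intervalIntegral.integral_of_le hℓ, integral_rpow (Or.inl (neg_lt_neg hα)),
      neg_add_eq_sub, Real.zero_rpow (sub_pos.2 hα).ne', sub_zero]
  rw [← lintegral_indicator Metric.isClosed_closedBall.measurableSet, lintegral_congr hball,
    lintegral_sub_right_eq_self (fun t => g |t|), lintegral_comp_abs, hg,
    setLIntegral_indicator measurableSet_Iic, Set.inter_comm, Set.Ioi_inter_Iic,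
    ← ofReal_integral_eq_lintegral_ofReal hint
      (ae_restrict_of_forall_mem measurableSet_Ioc fun u hu => Real.rpow_nonneg hu.1.le _),
    hval, ← ofReal_ofNat, ← ofReal_mul zero_le_two, mul_div_left_comm,
    mul_comm]

theorem setLIntegral_rpow_neg_le {α : ℝ} (hα₀ : 0 ≤ α) (hα₁ : α < 1) (s : ℝ) (J : Set ℝ) :
    ∫⁻ t in J, ENNReal.ofReal (|t - s| ^ (-α)) ≤
      ENNReal.ofReal (2 / (1 - α) + 1) * volume J ^ (1 - α) := by
  have hα : 0 < 1 - α := sub_pos.2 hα₁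
  rcases eq_or_ne (volume J) 0 with hJ0 | hJ0
  · simp [Measure.restrict_eq_zero.2 hJ0]
  rcases eq_or_ne (volume J) ∞ with hJtop | hJtop
  · rw [hJtop, top_rpow_of_pos hα, mul_top (ofReal_pos.2 (by positivity)).ne']
    exact le_top
  set ℓ := (volume J).toReal
  have hℓ : 0 < ℓ := toReal_pos hJ0 hJtop
  have hvol : volume J = ENNReal.ofReal ℓ := (ofReal_toReal hJtop).symm
  set f : ℝ → ℝ≥0∞ := fun t => ENNReal.ofReal (|t - s| ^ (-α))
  -- Splitting the kernel at distance `|J|` from `s` balances the two contributions.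
  have hsplit (t : ℝ) :
      f t ≤ (Metric.closedBall s ℓ).indicator f t + ENNReal.ofReal (ℓ ^ (-α)) := by
    by_cases ht : t ∈ Metric.closedBall s ℓ
    · rw [Set.indicator_of_mem ht]
      exact le_self_add
    · have hlt : ℓ < |t - s| := by simpa [Real.dist_eq] using ht
      refine le_add_left (ofReal_le_ofReal ?_)
      exact Real.rpow_le_rpow_of_nonpos hℓ hlt.le (neg_nonpos.2 hα₀)
  calc ∫⁻ t in J, f t
      ≤ ∫⁻ t in J, ((Metric.closedBall s ℓ).indicator f t + ENNReal.ofReal (ℓ ^ (-α))) :=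
        lintegral_mono hsplit
    _ ≤ (∫⁻ t in Metric.closedBall s ℓ, f t) + ENNReal.ofReal (ℓ ^ (-α)) * volume J := by
        rw [lintegral_add_right _ measurable_const, setLIntegral_const,
          ← lintegral_indicator Metric.isClosed_closedBall.measurableSet]
        gcongr
        exact Measure.restrict_le_self
    _ = ENNReal.ofReal (2 / (1 - α) + 1) * volume J ^ (1 - α) := by
        rw [setLIntegral_closedBall_rpow_neg hα₁ s hℓ.le, hvol, ofReal_rpow_of_pos hℓ,
          ← ofReal_mul (by positivity), ← ofReal_mul (by positivity),
          ← ofReal_add (by positivity) (by positivity), add_mul, one_mul,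
          ← Real.rpow_add_one hℓ.ne', neg_add_eq_sub]

theorem inv_sqrt_sq_sub_sq_le {b : ℝ} (hb : 0 < b) (t : ℝ) :
    (√(b ^ 2 - t ^ 2))⁻¹ ≤
      (√b)⁻¹ * (|t - b| ^ (-(1 / 2 : ℝ)) + |t - -b| ^ (-(1 / 2 : ℝ))) := by
  simp only [Real.rpow_neg (abs_nonneg _), ← Real.sqrt_eq_rpow, mul_add, ← mul_inv,
    ← Real.sqrt_mul hb.le]
  rcases le_or_gt (b ^ 2 - t ^ 2) 0 with hout | hin
  · rw [Real.sqrt_eq_zero'.2 hout, _root_.inv_zero]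
    positivity
  obtain ⟨hbt, htb⟩ := abs_lt_of_sq_lt_sq' (sub_pos.1 hin) hb.le
  -- The factor of `(b - t) (b + t)` farther from its zero is at least `b`.
  rcases le_total 0 t with ht | ht
  · have hpos : 0 < |t - b| := abs_pos.2 (sub_neg.2 htb).ne
    refine le_add_of_le_of_nonneg
      (inv_anti₀ (Real.sqrt_pos.2 (mul_pos hb hpos)) (Real.sqrt_le_sqrt ?_)) (by positivity)
    rw [abs_of_neg (sub_neg.2 htb)]
    nlinarith
  · have hpos : 0 < |t - -b| := abs_pos.2 (sub_pos.2 hbt).ne'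
    refine le_add_of_nonneg_of_le (by positivity)
      (inv_anti₀ (Real.sqrt_pos.2 (mul_pos hb hpos)) (Real.sqrt_le_sqrt ?_))
    rw [abs_of_pos (sub_pos.2 hbt)]
    nlinarith

theorem setLIntegral_inv_sqrt_sq_sub_sq_le {b : ℝ} (hb : 0 < b) (J : Set ℝ) :
    ∫⁻ t in J, ENNReal.ofReal (√(b ^ 2 - t ^ 2))⁻¹ ≤
      ENNReal.ofReal (10 * (√b)⁻¹) * volume J ^ (1 / 2 : ℝ) := by
  have hkernel (s : ℝ) : ∫⁻ t in J, ENNReal.ofReal (|t - s| ^ (-(1 / 2 : ℝ))) ≤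
      5 * volume J ^ (1 / 2 : ℝ) := by
    convert setLIntegral_rpow_neg_le (α := 1 / 2) (by norm_num) (by norm_num) s J using 2 <;>
      norm_num
  calc ∫⁻ t in J, ENNReal.ofReal (√(b ^ 2 - t ^ 2))⁻¹
      ≤ ∫⁻ t in J, ENNReal.ofReal (√b)⁻¹ * (ENNReal.ofReal (|t - b| ^ (-(1 / 2 : ℝ))) +
          ENNReal.ofReal (|t - -b| ^ (-(1 / 2 : ℝ)))) := by
        refine lintegral_mono fun t => ?_
        rw [← ofReal_add (by positivity) (by positivity), ← ofReal_mul (by positivity)]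
        exact ofReal_le_ofReal (inv_sqrt_sq_sub_sq_le hb t)
    _ = ENNReal.ofReal (√b)⁻¹ * ((∫⁻ t in J, ENNReal.ofReal (|t - b| ^ (-(1 / 2 : ℝ)))) +
          ∫⁻ t in J, ENNReal.ofReal (|t - -b| ^ (-(1 / 2 : ℝ)))) := by
        rw [lintegral_const_mul' _ _ ofReal_ne_top, lintegral_add_left (by fun_prop)]
    _ ≤ ENNReal.ofReal (√b)⁻¹ * (5 * volume J ^ (1 / 2 : ℝ) + 5 * volume J ^ (1 / 2 : ℝ)) := by
        gcongr <;> exact hkernel _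
    _ = ENNReal.ofReal (10 * (√b)⁻¹) * volume J ^ (1 / 2 : ℝ) := by
        rw [ofReal_mul (by norm_num), ofReal_ofNat]
        ring

theorem lintegral_inv_sqrt_sub_sq_le (c : ℝ) :
    ∫⁻ t, ENNReal.ofReal (√(c - t ^ 2))⁻¹ ≤ 20 := by
  rcases le_or_gt c 0 with hc | hc
  · have hzero (t : ℝ) : √(c - t ^ 2) = 0 :=
      Real.sqrt_eq_zero'.2 (sub_nonpos.2 (hc.trans (sq_nonneg t)))
    simp [hzero]
  have hb : 0 < √c := Real.sqrt_pos.2 hc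
  have hsupp : (Function.support fun t => ENNReal.ofReal (√(c - t ^ 2))⁻¹) ⊆ Set.Ioo (-√c) √c := by
    refine Function.support_subset_iff'.2 fun t ht => ?_
    have hle : c - t ^ 2 ≤ 0 :=
      sub_nonpos.2 (not_lt.1 fun hlt => ht (Real.sq_lt.1 hlt))
    rw [Real.sqrt_eq_zero'.2 hle, _root_.inv_zero, ofReal_zero]
  calc ∫⁻ t, ENNReal.ofReal (√(c - t ^ 2))⁻¹
      = ∫⁻ t in Set.Ioo (-√c) √c, ENNReal.ofReal (√(√c ^ 2 - t ^ 2))⁻¹ := by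
        rw [Real.sq_sqrt hc.le, ← lintegral_indicator measurableSet_Ioo,
          Set.indicator_eq_self.2 hsupp]
    _ ≤ ENNReal.ofReal (10 * (√√c)⁻¹) * volume (Set.Ioo (-√c) √c) ^ (1 / 2 : ℝ) :=
        setLIntegral_inv_sqrt_sq_sub_sq_le hb _
    _ = ENNReal.ofReal (10 * √2) := by
        rw [Real.volume_Ioo, sub_neg_eq_add, ← two_mul, ofReal_rpow_of_pos (by positivity),
          ← ofReal_mul (by positivity), ← Real.sqrt_eq_rpow, Real.sqrt_mul zero_le_two]
        congr 1
        field_simp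
    _ ≤ 20 := by
        have hsqrt : √2 ≤ 2 := Real.sqrt_le_iff.2 (by norm_num)
        rw [← ofReal_ofNat 20]
        exact ofReal_le_ofReal (by linarith)

/-! ### Products of intervals and coordinates -/

theorem lintegral_pi_le_of_forall_insertNth_le {k : ℕ} {α : Fin (k + 1) → Type*}
    [∀ i, MeasurableSpace (α i)] (μ : ∀ i, Measure (α i)) [∀ i, SigmaFinite (μ i)]
    (p : Fin (k + 1)) {g : (∀ i, α i) → ℝ≥0∞} (hg : Measurable g) {B : ℝ≥0∞}
    (hB : ∀ z : ∀ i, α (p.succAbove i), ∫⁻ t, g (p.insertNth t z) ∂μ p ≤ B) :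
    ∫⁻ y, g y ∂Measure.pi μ ≤ B * ∏ i, μ (p.succAbove i) Set.univ := by
  have hpres := (measurePreserving_piFinSuccAbove μ p).symm
  calc ∫⁻ y, g y ∂Measure.pi μ
      = ∫⁻ w : α p × ∀ i, α (p.succAbove i), g (p.insertNth w.1 w.2)
          ∂(μ p).prod (Measure.pi fun i => μ (p.succAbove i)) :=
        (hpres.lintegral_comp hg).symm
    _ = ∫⁻ z, ∫⁻ t, g (p.insertNth t z) ∂μ p ∂Measure.pi fun i => μ (p.succAbove i) :=
        lintegral_prod_symm' _ (hg.comp hpres.measurable)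
    _ ≤ ∫⁻ _, B ∂Measure.pi fun i => μ (p.succAbove i) := lintegral_mono hB
    _ = B * ∏ i, μ (p.succAbove i) Set.univ := by
        rw [lintegral_const, Measure.pi_univ]

theorem le_mul_prod_rpow_of_le {k : ℕ} {X C : ℝ≥0∞} {a : Fin (k + 1) → ℝ≥0∞}
    (homit : ∀ j, X ≤ C * ∏ i, a (Fin.succAbove j i)) {p : Fin (k + 1)}
    (hsqrt : X ≤ C * ((∏ i, a (p.succAbove i)) * a p ^ (1 / 2 : ℝ))) :
    X ≤ C * ∏ i, a i ^ (((k + 1 : ℕ) : ℝ) / (k + 2 : ℕ)) := by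
  set Q := ∏ i, a (p.succAbove i)
  set P := ∏ i, a i with hP
  have hPQ : P = a p * Q := Fin.prod_univ_succAbove _ _
  have homits : (∏ j, ∏ i, a ((p.succAbove j).succAbove i)) * Q = P ^ k := by
    rw [← Finset.prod_mul_distrib, Finset.prod_eq_pow_card fun j _ => ?_, Finset.card_univ,
      Fintype.card_fin]
    rw [mul_comm, hP, Fin.prod_univ_succAbove _ (p.succAbove j)]
  have hhalf : (a p ^ (1 / 2 : ℝ)) ^ 2 = a p := by
    rw [← ENNReal.rpow_mul_natCast]
    norm_num
  -- Each `a i` occurs `k + 1` times in the square of `hsqrt` times the bounds `homit j`, `j ≠ p`.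
  have hpow : X ^ (k + 2) ≤ C ^ (k + 2) * P ^ (k + 1) := by
    calc X ^ (k + 2) = X ^ 2 * ∏ _j : Fin k, X := by simp [pow_add, mul_comm]
      _ ≤ (C * (Q * a p ^ (1 / 2 : ℝ))) ^ 2 *
            ∏ j, (C * ∏ i, a ((p.succAbove j).succAbove i)) := by
        gcongr with j
        exact homit _
      _ = C ^ (k + 2) * (Q * (a p ^ (1 / 2 : ℝ)) ^ 2 *
            ((∏ j, ∏ i, a ((p.succAbove j).succAbove i)) * Q)) := by
        rw [Finset.prod_mul_distrib, Finset.prod_const, Finset.card_univ, Fintype.card_fin]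
        ring
      _ = C ^ (k + 2) * P ^ (k + 1) := by
        rw [hhalf, homits, pow_succ P, hPQ]
        ring
  have hk : (0 : ℝ) < (k + 2 : ℕ) := by positivity
  rw [ENNReal.prod_rpow_of_nonneg (by positivity), ← hP]
  refine (ENNReal.rpow_le_rpow_iff hk).1 ?_
  rw [ENNReal.mul_rpow_of_nonneg _ _ hk.le, ← ENNReal.rpow_mul, div_mul_cancel₀ _ hk.ne',
    ENNReal.rpow_natCast, ENNReal.rpow_natCast, ENNReal.rpow_natCast]
  exact hpow

theorem exists_sum_succAbove_sq_le {k : ℕ} {y : Fin (k + 1) → ℝ} (hy : ∑ i, y i ^ 2 ≤ 1) :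
    ∃ p : Fin (k + 1), ∑ i, y (p.succAbove i) ^ 2 ≤ 1 - (√(k + 1))⁻¹ ^ 2 := by
  obtain ⟨p, -, hp⟩ : ∃ p ∈ Finset.univ, (∑ i, y i ^ 2) / (k + 1) ≤ y p ^ 2 := by
    refine Finset.exists_le_of_sum_le Finset.univ_nonempty (le_of_eq ?_)
    rw [Finset.sum_const, Finset.card_univ, Fintype.card_fin, nsmul_eq_mul, Nat.cast_add_one,
      mul_div_cancel₀ _ (Nat.cast_add_one_ne_zero k)]
  refine ⟨p, ?_⟩
  have hinv : (k + 1 : ℝ)⁻¹ ≤ 1 := inv_le_one_of_one_le₀ (by simp)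
  have hprod := mul_nonneg (sub_nonneg.2 hy) (sub_nonneg.2 hinv)
  rw [inv_pow, Real.sq_sqrt (by positivity)]
  rw [div_eq_mul_inv] at hp
  rw [Fin.sum_univ_succAbove _ p] at hp hprod
  linarith

/-! ### Projections of surface measure -/

open Set Metric in
open scoped Pointwise in
theorem Ioo_smul_image_coe_sphere {E : Type*} [NormedAddCommGroup E] [NormedSpace ℝ E]
    (A : Set E) :
    Ioo (0 : ℝ) 1 • ((↑) '' ((↑) ⁻¹' A : Set (sphere (0 : E) 1)) : Set E) =
      (ball 0 1 ∩ (fun x => ‖x‖⁻¹ • x) ⁻¹' A) \ {0} := by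
  ext x
  rw [Subtype.image_preimage_coe]
  constructor
  · rintro ⟨r, ⟨hr0, hr1⟩, y, ⟨hy, hyA⟩, rfl⟩
    have hy1 : ‖y‖ = 1 := by simpa using hy
    have hnorm : ‖r • y‖ = r := by rw [norm_smul, hy1, mul_one, Real.norm_of_nonneg hr0.le]
    refine ⟨⟨by simpa [hnorm] using hr1, ?_⟩, ?_⟩
    · simpa only [mem_preimage, hnorm, inv_smul_smul₀ hr0.ne'] using hyA
    · exact norm_pos_iff.1 (hnorm.symm ▸ hr0)
  · rintro ⟨⟨hx1, hxA⟩, hx0 : x ≠ 0⟩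
    have hnorm : ‖x‖ ≠ 0 := norm_ne_zero_iff.2 hx0
    refine ⟨‖x‖, ⟨norm_pos_iff.2 hx0, by simpa using hx1⟩, ‖x‖⁻¹ • x, ⟨?_, hxA⟩, ?_⟩
    · simp [norm_smul, hnorm]
    · exact smul_inv_smul₀ hnorm x

open Metric in
theorem map_coe_toSphere {E : Type*} [NormedAddCommGroup E] [NormedSpace ℝ E]
    [FiniteDimensional ℝ E] [MeasurableSpace E] [BorelSpace E] (μ : Measure E)
    [μ.IsAddHaarMeasure] :
    μ.toSphere.map (↑) =
      Module.finrank ℝ E • (μ.restrict (ball 0 1)).map fun x => ‖x‖⁻¹ • x := by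
  rcases subsingleton_or_nontrivial E with hE | hE
  · simp [(μ.toSphere_eq_zero_iff).2 hE, Module.finrank_zero_of_subsingleton]
  ext A hA
  have hproj : Measurable fun x : E => ‖x‖⁻¹ • x := by fun_prop
  rw [Measure.map_apply measurable_subtype_coe hA,
    Measure.toSphere_apply' _ (measurable_subtype_coe hA), Ioo_smul_image_coe_sphere,
    measure_sdiff_null (measure_singleton 0), Measure.smul_apply, Measure.map_apply hproj hA,
    Measure.restrict_apply (hproj hA), Set.inter_comm, nsmul_eq_mul]

open Metric in
theorem lintegral_toSphere {E : Type*} [NormedAddCommGroup E] [NormedSpace ℝ E]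
    [FiniteDimensional ℝ E] [MeasurableSpace E] [BorelSpace E] (μ : Measure E)
    [μ.IsAddHaarMeasure] {g : E → ℝ≥0∞} (hg : Measurable g) :
    ∫⁻ ω, g ω ∂μ.toSphere = Module.finrank ℝ E * ∫⁻ x in ball 0 1, g (‖x‖⁻¹ • x) ∂μ := by
  rw [← lintegral_map hg measurable_subtype_coe, map_coe_toSphere,
    lintegral_smul_measure, lintegral_map hg (by fun_prop), nsmul_eq_mul]

/-- The unnormalized surface measure of the unit sphere of `ℝ^n`, as a measure on the sphere itself;
`normSphere n` is its normalization, pushed forward to `ℝ^n`. -/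
noncomputable abbrev surfaceMeasure (n : ℕ) :
    Measure (Metric.sphere (0 : EuclideanSpace ℝ (Fin n)) 1) :=
  (volume : Measure (EuclideanSpace ℝ (Fin n))).toSphere

theorem lintegral_norm_succAbove {m : ℕ} (q : Fin (m + 1)) {G : ℝ → (Fin m → ℝ) → ℝ≥0∞}
    (hG : Measurable (Function.uncurry G)) :
    ∫⁻ x : EuclideanSpace ℝ (Fin (m + 1)), G ‖x‖ (fun i => x (q.succAbove i)) =
      2 * ∫⁻ r in Set.Ioi 0, ∫⁻ z : Fin m → ℝ,
        ENNReal.ofReal (r * (√(r ^ 2 - ∑ i, z i ^ 2))⁻¹) * G r z := by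
  have hsplit : MeasurePreserving (fun x : EuclideanSpace ℝ (Fin (m + 1)) =>
      (x q, fun i => x (q.succAbove i))) volume (volume.prod volume) :=
    (volume_preserving_piFinSuccAbove (fun _ => ℝ) q).comp
      (PiLp.volume_preserving_ofLp (Fin (m + 1)))
  have hnorm (x : EuclideanSpace ℝ (Fin (m + 1))) :
      ‖x‖ = √(∑ i, x (q.succAbove i) ^ 2 + x q ^ 2) := by
    rw [EuclideanSpace.norm_eq, Fin.sum_univ_succAbove _ q, add_comm]
    simp only [Real.norm_eq_abs, sq_abs]
  have hmeas : Measurable fun w : ℝ × (Fin m → ℝ) => G √(∑ i, w.2 i ^ 2 + w.1 ^ 2) w.2 :=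
    hG.comp (by fun_prop : Measurable fun w : ℝ × (Fin m → ℝ) =>
      (√(∑ i, w.2 i ^ 2 + w.1 ^ 2), w.2))
  calc ∫⁻ x : EuclideanSpace ℝ (Fin (m + 1)), G ‖x‖ (fun i => x (q.succAbove i))
      = ∫⁻ w : ℝ × (Fin m → ℝ), G √(∑ i, w.2 i ^ 2 + w.1 ^ 2) w.2 ∂volume.prod volume := by
        rw [← hsplit.lintegral_comp hmeas]
        simp only [hnorm]
    _ = ∫⁻ z : Fin m → ℝ, ∫⁻ t, G √(∑ i, z i ^ 2 + t ^ 2) z :=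
        lintegral_prod_symm' _ hmeas
    _ = ∫⁻ z : Fin m → ℝ, 2 * ∫⁻ r in Set.Ioi 0,
          ENNReal.ofReal (r * (√(r ^ 2 - ∑ i, z i ^ 2))⁻¹) * G r z := by
        refine lintegral_congr fun z => ?_
        exact lintegral_comp_sqrt_add_sq (Finset.sum_nonneg fun i _ => sq_nonneg (z i)) (G · z)
    _ = _ := by
        rw [lintegral_const_mul' _ _ ofNat_ne_top, lintegral_lintegral_swap]
        exact (Measurable.mul (by fun_prop) (hG.comp measurable_swap)).aemeasurable

/-- Half the density, on `Fin k → ℝ`, of the projection of the surface measure of the unit sphere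
of `ℝ ^ (k + 1)` onto a coordinate hyperplane. It vanishes off the open unit ball because the
square root of a nonpositive number and the inverse of `0` are `0`. -/
noncomputable def sphereProjDensity {k : ℕ} (y : Fin k → ℝ) : ℝ≥0∞ :=
  ENNReal.ofReal (√(1 - ∑ i, y i ^ 2))⁻¹

theorem measurable_sphereProjDensity {k : ℕ} : Measurable (sphereProjDensity (k := k)) := by
  unfold sphereProjDensity
  fun_prop

theorem lintegral_sphereProjDensity_smul {m : ℕ} {r : ℝ} (hr : 0 < r) {h : (Fin m → ℝ) → ℝ≥0∞}
    (hh : Measurable h) :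
    ∫⁻ z : Fin m → ℝ, ENNReal.ofReal (r * (√(r ^ 2 - ∑ i, z i ^ 2))⁻¹) * h (r⁻¹ • z) =
      ENNReal.ofReal (r ^ m) * ∫⁻ y, sphereProjDensity y * h y := by
  have hdens (z : Fin m → ℝ) :
      ENNReal.ofReal (r * (√(r ^ 2 - ∑ i, z i ^ 2))⁻¹) = sphereProjDensity (r⁻¹ • z) := by
    have hfac : r ^ 2 - ∑ i, z i ^ 2 = r ^ 2 * (1 - ∑ i, (r⁻¹ • z) i ^ 2) := by
      simp only [Pi.smul_apply, smul_eq_mul, mul_pow, ← Finset.mul_sum]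
      field_simp
    rw [sphereProjDensity, hfac, Real.sqrt_mul (sq_nonneg r), Real.sqrt_sq hr.le, mul_inv,
      mul_inv_cancel_left₀ hr.ne']
  simp only [hdens]
  rw [← lintegral_map (f := fun y => sphereProjDensity y * h y)
    (measurable_sphereProjDensity.mul hh) (measurable_const_smul r⁻¹),
    Measure.map_addHaar_smul _ (inv_ne_zero hr.ne'), lintegral_smul_measure,
    Module.finrank_fin_fun, inv_pow, inv_inv, abs_of_nonneg (by positivity), smul_eq_mul]

open Set Metric in
theorem setLIntegral_ball_normalize_succAbove {m : ℕ} (q : Fin (m + 1))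
    {h : (Fin m → ℝ) → ℝ≥0∞} (hh : Measurable h) :
    ∫⁻ x : EuclideanSpace ℝ (Fin (m + 1)) in ball 0 1,
        h (fun i => (‖x‖⁻¹ • x) (q.succAbove i)) =
      2 * ((m + 1 : ℝ≥0∞)⁻¹ * ∫⁻ y, sphereProjDensity y * h y) := by
  set G : ℝ → (Fin m → ℝ) → ℝ≥0∞ := fun r z => (Iio 1).indicator (fun r => h (r⁻¹ • z)) r
  have hG : Measurable (Function.uncurry G) :=
    Measurable.indicator (by fun_prop : Measurable fun w : ℝ × (Fin m → ℝ) => h (w.1⁻¹ • w.2))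
      (measurable_fst measurableSet_Iio)
  have hball (x : EuclideanSpace ℝ (Fin (m + 1))) :
      (ball 0 1).indicator (fun x => h fun i => (‖x‖⁻¹ • x) (q.succAbove i)) x =
        G ‖x‖ fun i => x (q.succAbove i) := by
    by_cases hx : ‖x‖ ∈ Iio 1
    · simp only [G, indicator_of_mem hx, indicator_of_mem (mem_ball_zero_iff.2 hx)]
      rfl
    · simp only [G, indicator_of_notMem hx, indicator_of_notMem (mem_ball_zero_iff.not.2 hx)]
  have hscale (r : ℝ) (hr : r ∈ Ioi 0) :
      ∫⁻ z : Fin m → ℝ, ENNReal.ofReal (r * (√(r ^ 2 - ∑ i, z i ^ 2))⁻¹) * G r z =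
        (Iio 1).indicator (fun r =>
          ENNReal.ofReal (r ^ m) * ∫⁻ y, sphereProjDensity y * h y) r := by
    by_cases hr1 : r ∈ Iio 1
    · simp only [G, indicator_of_mem hr1, lintegral_sphereProjDensity_smul hr hh]
    · simp only [G, indicator_of_notMem hr1, mul_zero, lintegral_zero]
  rw [← lintegral_indicator measurableSet_ball, lintegral_congr hball,
    lintegral_norm_succAbove q hG, setLIntegral_congr_fun measurableSet_Ioi hscale,
    setLIntegral_indicator measurableSet_Iio, Iio_inter_Ioi,
    lintegral_mul_const _ (by fun_prop), setLIntegral_Ioo_ofReal_pow]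

theorem measurePreserving_surfaceMeasure_succAbove {m : ℕ} (q : Fin (m + 1)) :
    MeasurePreserving
      (fun (ω : Metric.sphere (0 : EuclideanSpace ℝ (Fin (m + 1))) 1) i => ω.1 (q.succAbove i))
      (surfaceMeasure (m + 1))
      (2 • volume.withDensity sphereProjDensity : Measure (Fin m → ℝ)) := by
  refine ⟨by fun_prop, Measure.ext_of_lintegral _ fun (h : (Fin m → ℝ) → ℝ≥0∞) hh => ?_⟩
  have hcoord : Measurable fun x : EuclideanSpace ℝ (Fin (m + 1)) =>
    h fun i => x (q.succAbove i) := by fun_prop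
  have hcancel : ((m + 1 : ℕ) : ℝ≥0∞) * (m + 1 : ℝ≥0∞)⁻¹ = 1 := by
    rw [Nat.cast_add_one, ENNReal.mul_inv_cancel (by simp) (by simp)]
  rw [lintegral_map hh (by fun_prop), lintegral_toSphere volume hcoord,
    finrank_euclideanSpace_fin, setLIntegral_ball_normalize_succAbove q hh, mul_left_comm,
    ← mul_assoc (_ : ℝ≥0∞) (_⁻¹), hcancel, one_mul, lintegral_smul_measure,
    lintegral_withDensity_eq_lintegral_mul _ measurable_sphereProjDensity hh]
  simp

theorem quasiMeasurePreserving_surfaceMeasure_apply {m : ℕ} (i : Fin (m + 2)) :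
    Measure.QuasiMeasurePreserving
      (fun ω : Metric.sphere (0 : EuclideanSpace ℝ (Fin (m + 2))) 1 => ω.1 i)
      (surfaceMeasure (m + 2)) volume := by
  obtain ⟨q, hq⟩ := exists_ne i
  obtain ⟨j, rfl⟩ := Fin.exists_succAbove_eq hq.symm
  have hac : (2 • volume.withDensity sphereProjDensity : Measure (Fin (m + 1) → ℝ)) ≪ volume :=
    (withDensity_absolutelyContinuous _ _).smul_left 2
  exact (Measure.quasiMeasurePreserving_eval (fun _ => volume) j).comp
    ((measurePreserving_surfaceMeasure_succAbove q).quasiMeasurePreserving.mono_right hac)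

/-! ### Boxes -/

theorem sphereProjDensity_insertNth {k : ℕ} (p : Fin (k + 1)) (t : ℝ) (z : Fin k → ℝ) :
    sphereProjDensity (p.insertNth t z : Fin (k + 1) → ℝ) =
      ENNReal.ofReal (√(1 - ∑ i, z i ^ 2 - t ^ 2))⁻¹ := by
  simp only [sphereProjDensity, Fin.sum_univ_succAbove _ p, Fin.insertNth_apply_same,
    Fin.insertNth_apply_succAbove]
  rw [add_comm, sub_sub]

theorem setLIntegral_sphereProjDensity_le_omit {k : ℕ} (J : Fin (k + 1) → Set ℝ)
    (p : Fin (k + 1)) :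
    ∫⁻ y in Set.univ.pi J, sphereProjDensity y ≤ 20 * ∏ i, volume (J (p.succAbove i)) := by
  have hslice (z : Fin k → ℝ) :
      ∫⁻ t in J p, sphereProjDensity (p.insertNth t z : Fin (k + 1) → ℝ) ≤ 20 := by
    simp only [sphereProjDensity_insertNth]
    exact (setLIntegral_le_lintegral _ _).trans (lintegral_inv_sqrt_sub_sq_le _)
  rw [volume_pi, Measure.restrict_pi_pi]
  refine (lintegral_pi_le_of_forall_insertNth_le _ p measurable_sphereProjDensity
    hslice).trans_eq ?_
  simp only [Measure.restrict_apply_univ]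

theorem setLIntegral_sphereProjDensity_le_sqrt {k : ℕ} (J : Fin (k + 1) → Set ℝ)
    (p : Fin (k + 1)) {b : ℝ} (hb : 0 < b) :
    ∫⁻ y in Set.univ.pi J,
        {y | ∑ i, y (p.succAbove i) ^ 2 ≤ 1 - b ^ 2}.indicator sphereProjDensity y ≤
      ENNReal.ofReal (10 * (√b)⁻¹) *
        ((∏ i, volume (J (p.succAbove i))) * volume (J p) ^ (1 / 2 : ℝ)) := by
  have hmeas : MeasurableSet {y : Fin (k + 1) → ℝ | ∑ i, y (p.succAbove i) ^ 2 ≤ 1 - b ^ 2} :=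
    measurableSet_le (by fun_prop) measurable_const
  have hslice (z : Fin k → ℝ) : ∫⁻ t in J p,
      {y : Fin (k + 1) → ℝ | ∑ i, y (p.succAbove i) ^ 2 ≤ 1 - b ^ 2}.indicator
        sphereProjDensity (p.insertNth t z) ≤
      ENNReal.ofReal (10 * (√b)⁻¹) * volume (J p) ^ (1 / 2 : ℝ) := by
    simp only [Set.indicator_apply, Set.mem_ofPred_eq, Fin.insertNth_apply_succAbove,
      sphereProjDensity_insertNth]
    split_ifs with hz
    · have hbz : b ≤ √(1 - ∑ i, z i ^ 2) := Real.le_sqrt_of_sq_le (le_sub_comm.1 hz)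
      rw [← Real.sq_sqrt (x := 1 - ∑ i, z i ^ 2) ((sq_nonneg b).trans (le_sub_comm.1 hz))]
      refine (setLIntegral_inv_sqrt_sq_sub_sq_le (hb.trans_le hbz) (J p)).trans ?_
      gcongr
    · simp
  rw [volume_pi, Measure.restrict_pi_pi]
  refine (lintegral_pi_le_of_forall_insertNth_le _ p (measurable_sphereProjDensity.indicator hmeas)
    hslice).trans_eq ?_
  simp only [Measure.restrict_apply_univ]
  ring

theorem sphereProjDensity_le_sum_indicator {k : ℕ} (y : Fin (k + 1) → ℝ) :
    sphereProjDensity y ≤ ∑ p : Fin (k + 1),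
      {y | ∑ i, y (p.succAbove i) ^ 2 ≤ 1 - (√(k + 1))⁻¹ ^ 2}.indicator sphereProjDensity y := by
  rcases le_total (∑ i, y i ^ 2) 1 with hy | hy
  · obtain ⟨p, hp⟩ := exists_sum_succAbove_sq_le hy
    refine le_trans ?_ (Finset.single_le_sum_of_canonicallyOrdered (Finset.mem_univ p))
    rw [Set.indicator_of_mem (by exact hp)]
  · rw [sphereProjDensity, Real.sqrt_eq_zero'.2 (sub_nonpos.2 hy), _root_.inv_zero, ofReal_zero]
    exact zero_le

theorem exists_setLIntegral_sphereProjDensity_le (k : ℕ) :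
    ∃ C : ℝ≥0∞, C ≠ ∞ ∧ ∀ J : Fin (k + 1) → Set ℝ,
      ∫⁻ y in Set.univ.pi J, sphereProjDensity y ≤
        C * ∏ i, volume (J i) ^ (((k + 1 : ℕ) : ℝ) / (k + 2 : ℕ)) := by
  set b : ℝ := (√(k + 1))⁻¹
  have hb : 0 < b := by positivity
  set C : ℝ≥0∞ := 20 + ENNReal.ofReal (10 * (√b)⁻¹)
  refine ⟨(k + 1 : ℕ) * C, by finiteness, fun J => ?_⟩
  set S : Fin (k + 1) → Set (Fin (k + 1) → ℝ) :=
    fun p => {y | ∑ i, y (p.succAbove i) ^ 2 ≤ 1 - b ^ 2}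
  have hS (p) : Measurable ((S p).indicator sphereProjDensity) :=
    measurable_sphereProjDensity.indicator (measurableSet_le (by fun_prop) measurable_const)
  have hpiece (p) : ∫⁻ y in Set.univ.pi J, (S p).indicator sphereProjDensity y ≤
      C * ∏ i, volume (J i) ^ (((k + 1 : ℕ) : ℝ) / (k + 2 : ℕ)) := by
    refine le_mul_prod_rpow_of_le (a := fun i => volume (J i)) (p := p) (fun j => ?_) ?_
    · calc ∫⁻ y in Set.univ.pi J, (S p).indicator sphereProjDensity y
          ≤ ∫⁻ y in Set.univ.pi J, sphereProjDensity y :=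
            lintegral_mono (Set.indicator_le_self _ _)
        _ ≤ 20 * ∏ i, volume (J (j.succAbove i)) := setLIntegral_sphereProjDensity_le_omit J j
        _ ≤ C * ∏ i, volume (J (j.succAbove i)) := by gcongr; exact le_self_add
    · refine (setLIntegral_sphereProjDensity_le_sqrt J p hb).trans ?_
      gcongr
      exact le_add_self
  calc ∫⁻ y in Set.univ.pi J, sphereProjDensity y
      ≤ ∫⁻ y in Set.univ.pi J, ∑ p, (S p).indicator sphereProjDensity y :=
        lintegral_mono sphereProjDensity_le_sum_indicator
    _ = ∑ p, ∫⁻ y in Set.univ.pi J, (S p).indicator sphereProjDensity y :=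
        lintegral_finsetSum _ fun p _ => hS p
    _ ≤ ∑ _p : Fin (k + 1), C * ∏ i, volume (J i) ^ (((k + 1 : ℕ) : ℝ) / (k + 2 : ℕ)) :=
        Finset.sum_le_sum fun p _ => hpiece p
    _ = _ := by simp [mul_assoc]

/-! ### Spherical averages -/

theorem exists_surfaceMeasure_sub_mem_le (k : ℕ) :
    ∃ C : ℝ≥0∞, C ≠ ∞ ∧ ∀ (I : Fin (k + 1) → Set ℝ) (x : ℝ),
      surfaceMeasure (k + 2) {ω | ∀ i : Fin (k + 1), x - ω.1 i.castSucc ∈ I i} ≤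
        C * ∏ i, volume (I i) ^ (((k + 1 : ℕ) : ℝ) / (k + 2 : ℕ)) := by
  obtain ⟨C, hC, hbox⟩ := exists_setLIntegral_sphereProjDensity_le k
  refine ⟨2 * C, by finiteness, fun I x => ?_⟩
  set J : Fin (k + 1) → Set ℝ := fun i => (fun t => x - t) ⁻¹' I i
  have hJ (i) : volume (J i) ≤ volume (I i) :=
    (Measure.measurePreserving_sub_left volume x).measure_preimage_le (I i)
  calc surfaceMeasure (k + 2) {ω | ∀ i : Fin (k + 1), x - ω.1 i.castSucc ∈ I i}
      ≤ (2 • volume.withDensity sphereProjDensity) (Set.univ.pi J) := by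
        convert (measurePreserving_surfaceMeasure_succAbove (Fin.last (k + 1))).measure_preimage_le
          (Set.univ.pi J)
        ext ω
        simp [J]
    _ = 2 * ∫⁻ y in Set.univ.pi J, sphereProjDensity y := by
        rw [Measure.smul_apply, withDensity_apply', nsmul_eq_mul, Nat.cast_ofNat]
    _ ≤ 2 * C * ∏ i, volume (J i) ^ (((k + 1 : ℕ) : ℝ) / (k + 2 : ℕ)) := by
        rw [mul_assoc]
        gcongr
        exact hbox J
    _ ≤ 2 * C * ∏ i, volume (I i) ^ (((k + 1 : ℕ) : ℝ) / (k + 2 : ℕ)) := by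
        gcongr 2 * C * ∏ i, ?_ ^ _ with i
        exact hJ i

theorem lintegral_normSphere {n : ℕ} (g : EuclideanSpace ℝ (Fin n) → ℝ≥0∞) :
    ∫⁻ σ, g σ ∂(normSphere n) =
      (surfaceMeasure n Set.univ)⁻¹ * ∫⁻ ω, g ω.1 ∂surfaceMeasure n := by
  have hemb : MeasurableEmbedding
      (Subtype.val : Metric.sphere (0 : EuclideanSpace ℝ (Fin n)) 1 → _) :=
    MeasurableEmbedding.subtype_coe Metric.isClosed_sphere.measurableSet
  rw [normSphere, lintegral_smul_measure, hemb.lintegral_map, hemb.map_apply, Set.preimage_univ,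
    smul_eq_mul]

theorem sphAvg_indicator_le {k : ℕ} {f : Fin (k + 2) → ℝ → ℝ} {I : Fin (k + 1) → Set ℝ}
    (hf : ∀ i, f i.castSucc = (I i).indicator fun _ => 1) (x : ℝ) :
    sphAvg (k + 2) f x ≤
      (surfaceMeasure (k + 2) Set.univ)⁻¹ *
        (essSup (fun y => ENNReal.ofReal (f (Fin.last (k + 1)) y)) volume *
          surfaceMeasure (k + 2) {ω | ∀ i : Fin (k + 1), x - ω.1 i.castSucc ∈ I i}) := by
  set M := essSup (fun y => ENNReal.ofReal (f (Fin.last (k + 1)) y)) volume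
  have hlast := ((Measure.measurePreserving_sub_left volume x).quasiMeasurePreserving.comp
    (quasiMeasurePreserving_surfaceMeasure_apply (Fin.last (k + 1)))).ae
    (ENNReal.ae_le_essSup fun y => ENNReal.ofReal (f (Fin.last (k + 1)) y))
  rw [sphAvg, lintegral_normSphere]
  gcongr
  refine (lintegral_mono_ae ?_).trans (lintegral_indicator_const_le _ M)
  filter_upwards [hlast] with ω hω
  rw [Fin.prod_univ_castSucc]
  by_cases hI : ∀ i : Fin (k + 1), x - ω.1 i.castSucc ∈ I i
  · simpa [hf, hI] using hω
  · obtain ⟨i, hi⟩ := not_forall.1 hI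
    rw [Finset.prod_eq_zero (Finset.mem_univ i) (by simp [hf, hi]), zero_mul]
    exact zero_le

theorem restricted_type_at_E_general (n : ℕ) (hn : 2 ≤ n) :
    ∃ C : ℝ, 0 < C ∧ ∀ (I : Fin (n - 1) → Set ℝ) (fn : ℝ → ℝ),
      lpNorm ∞ (sphAvg n (fun j =>
          if h : (j : ℕ) < n - 1 then (I ⟨j, h⟩).indicator fun _ => (1 : ℝ) else fn)) ≤
        ENNReal.ofReal C * (∏ j, volume (I j) ^ (((n : ℝ) - 1) / n)) *
          lpNorm ∞ (fun x => ENNReal.ofReal (fn x)) := by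
  obtain ⟨k, rfl⟩ := Nat.exists_eq_add_of_le' hn
  obtain ⟨C, hC, hbox⟩ := exists_surfaceMeasure_sub_mem_le k
  set μ := surfaceMeasure (k + 2)
  have hK : (μ Set.univ)⁻¹ * C ≠ ∞ :=
    mul_ne_top (inv_ne_top.2 (Measure.measure_univ_ne_zero.2 (Measure.toSphere_ne_zero _))) hC
  refine ⟨((μ Set.univ)⁻¹ * C).toReal + 1, by positivity, ?_⟩
  have hle : (μ Set.univ)⁻¹ * C ≤ ENNReal.ofReal (((μ Set.univ)⁻¹ * C).toReal + 1) :=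
    (le_ofReal_iff_toReal_le hK (by positivity)).2 (lt_add_one _).le
  intro (I : Fin (k + 1) → Set ℝ) fn
  set f : Fin (k + 2) → ℝ → ℝ := fun j =>
    if h : (j : ℕ) < k + 1 then (I ⟨j, h⟩).indicator fun _ => (1 : ℝ) else fn
  have hlast : f (Fin.last (k + 1)) = fn := dif_neg (lt_irrefl _)
  have hexp : (((k + 2 : ℕ) : ℝ) - 1) / (k + 2 : ℕ) = ((k + 1 : ℕ) : ℝ) / (k + 2 : ℕ) := by
    push_cast
    ring
  simp only [_root_.lpNorm, if_true, hexp]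
  refine essSup_le_of_ae_le _ (Filter.Eventually.of_forall fun x => ?_)
  calc sphAvg (k + 2) f x
      ≤ (μ Set.univ)⁻¹ * (essSup (fun y => ENNReal.ofReal (fn y)) volume *
          (C * ∏ i, volume (I i) ^ (((k + 1 : ℕ) : ℝ) / (k + 2 : ℕ)))) := by
        refine (sphAvg_indicator_le (fun i => dif_pos i.2) x).trans ?_
        rw [hlast]
        gcongr
        exact hbox I x
    _ = (μ Set.univ)⁻¹ * C * (∏ i, volume (I i) ^ (((k + 1 : ℕ) : ℝ) / (k + 2 : ℕ))) *
          essSup (fun y => ENNReal.ofReal (fn y)) volume := by ring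
    _ ≤ _ := mul_le_mul' (mul_le_mul' hle le_rfl) le_rfl

theorem restricted_type_at_E (n : ℕ) (hn : 3 ≤ n) :
    ∃ C : ℝ, 0 < C ∧ ∀ I : Fin (n - 1) → Set ℝ,
      (∀ j, MeasurableSet (I j)) → (∀ j, volume (I j) < ∞) →
      ∀ fn : ℝ → ℝ, Measurable fn → (∀ x, 0 ≤ fn x) →
      lpNorm ∞ (sphAvg n (fun j =>
          if h : (j : ℕ) < n - 1 then (I ⟨j, h⟩).indicator fun _ => (1 : ℝ) else fn)) ≤
        ENNReal.ofReal C * (∏ j, volume (I j) ^ (((n : ℝ) - 1) / n)) *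
          lpNorm ∞ (fun x => ENNReal.ofReal (fn x)) := by
  obtain ⟨C, hC, hbound⟩ := restricted_type_at_E_general n (by omega)
  exact ⟨C, hC, fun I _ _ fn _ _ => hbound I fn⟩
end
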